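/- arXiv:2212.13315 — 5 statements merged into one kernel-verified Lean document; each statement's English description precedes it below -/
import Mathlib

section
/- Let p be a prime and let K be a perfectoid field of characteristic p with ring of integers O_K and pseudo-uniformizer π. Then the integral perfectoid Tate algebra O_K⟨x^{1/p^∞}⟩ — the π-adic completion of the monoid algebra O_K[x^{1/p^∞}] — admits a family (𝔭_λ)_{λ∈(0,1)} of prime ideals, indexed by the real interval (0,1), with 𝔭_λ ⊊ 𝔭_μ whenever λ < μ; in particular it has uncountable Krull dimension. -/
set_option synthInstance.maxHeartbeats 1000000
set_option maxHeartbeats 1000000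

/-- The additive monoid of nonnegative rationals with `p`-power denominator. -/
def pPowRat (p : ℕ) : AddSubmonoid ℚ where
  carrier := {q : ℚ | 0 ≤ q ∧ ∃ (n : ℕ) (m : ℤ), (p : ℚ) ^ n * q = (m : ℚ)}
  zero_mem' := ⟨le_rfl, 0, 0, by simp⟩
  add_mem' := by
    rintro a b ⟨ha, n, m, hm⟩ ⟨hb, n', m', hm'⟩
    refine ⟨add_nonneg ha hb, n + n', m * (p : ℤ) ^ n' + m' * (p : ℤ) ^ n, ?_⟩
    push_cast
    rw [← hm, ← hm']
    ring

section Integers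

variable {K : Type*} [Field K] (v : Valuation K NNReal)

/-- Divisibility by powers of `π` in the valuation ring is measured by the valuation. -/
lemma mem_span_singleton_pow_iff_valuation_le {π : v.integer} (hπ : 0 < v (π : K)) (n : ℕ)
    (x : v.integer) :
    x ∈ Ideal.span {π} ^ n ↔ v (x : K) ≤ v (π : K) ^ n := by
  have h0 : (π : K) ≠ 0 := fun h => by simp [h] at hπ
  rw [Ideal.span_singleton_pow, Ideal.mem_span_singleton]
  constructor
  · rintro ⟨y, rfl⟩
    have hy : v (y : K) ≤ 1 := y.2
    simpa using mul_le_of_le_one_right' hy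
  · intro h
    refine ⟨⟨(x : K) / (π : K) ^ n, ?_⟩, Subtype.ext ?_⟩
    · change v _ ≤ 1
      rw [map_div₀, map_pow]
      exact div_le_one_of_le₀ h (by positivity)
    · push_cast
      field_simp

/-- A metrically complete valuation ring is adically complete for a pseudo-uniformizer. -/
lemma isAdicComplete_valuation_integer
    (hcomplete : ∀ f : ℕ → K,
      (∀ ε : NNReal, 0 < ε → ∃ N : ℕ, ∀ m ≥ N, ∀ n ≥ N, v (f m - f n) < ε) →
      ∃ L : K, ∀ ε : NNReal, 0 < ε → ∃ N : ℕ, ∀ n ≥ N, v (f n - L) < ε)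
    {π : v.integer} (hπ0 : 0 < v (π : K)) (hπ1 : v (π : K) < 1) :
    IsAdicComplete (Ideal.span {π}) v.integer := by
  have key := mem_span_singleton_pow_iff_valuation_le v hπ0
  have small : ∀ ε : NNReal, 0 < ε → ∃ N : ℕ, v (π : K) ^ N < ε :=
    fun ε hε => exists_pow_lt_of_lt_one hε hπ1
  refine { haus' := fun x hx => ?_, prec' := fun f hf => ?_ }
  · have hx' : ∀ n, v (x : K) ≤ v (π : K) ^ n := fun n => by
      have := hx n
      rw [SModEq.zero, smul_eq_mul, Ideal.mul_top] at this
      exact (key n x).1 this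
    by_contra hne
    have hpos : 0 < v (x : K) := by
      rw [pos_iff_ne_zero, Ne, v.zero_iff]
      exact fun h => hne (Subtype.ext h)
    obtain ⟨N, hN⟩ := small _ hpos
    exact absurd (hx' N) (not_le.2 hN)
  · have hf' : ∀ m n, m ≤ n → v ((f m : K) - f n) ≤ v (π : K) ^ m := fun m n h => by
      have := hf h
      rw [SModEq.sub_mem, smul_eq_mul, Ideal.mul_top] at this
      simpa using (key m _).1 this
    obtain ⟨L, hL⟩ := hcomplete (fun n => (f n : K)) (fun ε hε => by
      obtain ⟨N, hN⟩ := small ε hε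
      refine ⟨N, fun m hm n hn => lt_of_le_of_lt ?_ hN⟩
      have h1 := hf' N m hm
      have h2 := hf' N n hn
      rw [show (f m : K) - f n = (f N - f n) - (f N - f m) by ring]
      exact (v.map_sub _ _).trans (max_le h2 h1))
    have hLn : ∀ n, v ((f n : K) - L) ≤ v (π : K) ^ n := fun n => by
      obtain ⟨N, hN⟩ := hL (v (π : K) ^ n) (by positivity)
      rw [show (f n : K) - L = (f n - f (max n N)) + (f (max n N) - L) by ring]
      exact (v.map_add _ _).trans
        (max_le (hf' _ _ (le_max_left _ _)) (hN _ (le_max_right _ _)).le)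
    have hL1 : v L ≤ 1 := by
      rw [show L = f 0 - ((f 0 : K) - L) by ring]
      exact (v.map_sub _ _).trans (max_le (f 0).2 (by simpa using hLn 0))
    refine ⟨⟨L, hL1⟩, fun n => ?_⟩
    rw [SModEq.sub_mem, smul_eq_mul, Ideal.mul_top]
    exact (key n _).2 (by simpa using hLn n)

end Integers

section Powers

variable {p : ℕ} {K : Type*} [Field K] (v : Valuation K NNReal)

lemma pow_prime_pow_bijective (hperf : Function.Bijective (fun x : K => x ^ p)) (n : ℕ) :
    Function.Bijective (fun x : K => x ^ p ^ n) := by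
  have : (fun x : K => x ^ p ^ n) = (fun x : K => x ^ p)^[n] := by
    rw [pow_iterate]
  rw [this]
  exact hperf.iterate n

lemma exists_natCast_of_mem_pPowRat {q : ℚ} (hq : q ∈ pPowRat p) :
    ∃ n m : ℕ, (p : ℚ) ^ n * q = m := by
  obtain ⟨h0, n, m, hm⟩ := hq
  have : (0 : ℚ) ≤ m := hm ▸ by positivity
  lift m to ℕ using by exact_mod_cast this
  exact ⟨n, m, by exact_mod_cast hm⟩

/-- In a perfect valued field, an integral element has compatible `p`-power fractional powers. -/
lemma exists_fractionalPower (hp : p.Prime)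
    (hperf : Function.Bijective (fun x : K => x ^ p)) (t : v.integer) :
    ∃ φ : Multiplicative (pPowRat p) →* v.integer,
      ∀ (q : pPowRat p) (n m : ℕ), (p : ℚ) ^ n * q = m →
        (φ (Multiplicative.ofAdd q)) ^ p ^ n = t ^ m := by
  have hinj (n : ℕ) := (pow_prime_pow_bijective hperf n).1
  have hp0 : (p : ℚ) ≠ 0 := by exact_mod_cast hp.ne_zero
  have hex : ∀ q : pPowRat p, ∃ y : v.integer, ∀ n m : ℕ, (p : ℚ) ^ n * q = m →
      y ^ p ^ n = t ^ m := by
    intro q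
    obtain ⟨n, m, hnm⟩ := exists_natCast_of_mem_pPowRat q.2
    obtain ⟨y, hy⟩ := (pow_prime_pow_bijective hperf n).2 ((t : K) ^ m)
    simp only at hy
    have hy1 : v y ≤ 1 := by
      have h : v y ^ p ^ n ≤ 1 := by
        rw [← map_pow, hy, map_pow]
        exact pow_le_one' t.2 m
      exact (pow_le_one_iff (pow_ne_zero _ hp.ne_zero)).1 h
    refine ⟨⟨y, hy1⟩, fun n' m' h' => Subtype.ext (hinj n ?_)⟩
    push_cast
    have hm : p ^ n * m' = p ^ n' * m := by
      have : (p : ℚ) ^ n * m' = (p : ℚ) ^ n' * m := by rw [← h', ← hnm]; ring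
      exact_mod_cast this
    rw [← pow_mul, mul_comm (p ^ n'), pow_mul, hy, ← pow_mul, ← pow_mul, mul_comm m', hm,
      mul_comm m]
  choose y hy using hex
  have huniq : ∀ (q : pPowRat p) (z : v.integer) (n m : ℕ), (p : ℚ) ^ n * q = m →
      z ^ p ^ n = t ^ m → z = y q := fun q z n m h hz =>
    Subtype.ext (hinj n (by
      have := hz.trans (hy q n m h).symm
      simpa using congrArg Subtype.val this))
  refine ⟨{ toFun := fun q => y q.toAdd, map_one' := ?_, map_mul' := ?_ }, fun q => hy q⟩
  · exact (huniq 0 1 0 0 (by simp) (by simp)).symm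
  · intro a b
    obtain ⟨n, m, h⟩ := exists_natCast_of_mem_pPowRat a.toAdd.2
    obtain ⟨n', m', h'⟩ := exists_natCast_of_mem_pPowRat b.toAdd.2
    refine (huniq _ _ (n + n') (m * p ^ n' + m' * p ^ n) ?_ ?_).symm
    · push_cast [toAdd_mul]
      rw [← h, ← h']
      ring
    · rw [mul_pow, pow_add p, pow_mul, hy _ n m h, mul_comm (p ^ n), pow_mul, hy _ n' m' h',
        pow_add, pow_mul, pow_mul]

end Powers

/-- A ring homomorphism into an adically complete ring extends to the adic completion. -/
lemma exists_ringHom_adicCompletion {R S : Type*} [CommRing R] [CommRing S] (I : Ideal R)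
    (J : Ideal S) [IsAdicComplete J S] (φ : R →+* S) (h : I ≤ J.comap φ) :
    ∃ F : AdicCompletion I R →+* S, ∀ (f : AdicCompletion.AdicCauchySequence I R) (n : ℕ),
      F (AdicCompletion.mk I R f) - φ (f n) ∈ J ^ n := by
  have hn (n : ℕ) : I ^ n ≤ (J ^ n).comap φ :=
    (Ideal.pow_right_mono h n).trans (Ideal.le_comap_pow φ n)
  let g (n : ℕ) : AdicCompletion I R →+* S ⧸ J ^ n :=
    (Ideal.quotientMap (J ^ n) φ (hn n)).comp (AdicCompletion.evalₐ I n : _ →+* R ⧸ I ^ n)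
  have hg (n : ℕ) (f : AdicCompletion.AdicCauchySequence I R) :
      g n (AdicCompletion.mk I R f) = Ideal.Quotient.mk (J ^ n) (φ (f n)) := by
    simp [g]
  have hcompat {m n : ℕ} (hle : m ≤ n) : (Ideal.Quotient.factorPow J hle).comp (g n) = g m := by
    ext x
    obtain ⟨f, rfl⟩ := AdicCompletion.mk_surjective I R x
    rw [RingHom.comp_apply, hg, hg, Ideal.Quotient.factor_mk, Ideal.Quotient.eq, ← map_sub]
    have := (f.property hle).symm
    rw [SModEq.sub_mem, smul_eq_mul, Ideal.mul_top] at this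
    exact hn m this
  refine ⟨IsAdicComplete.liftRingHom J g hcompat, fun f n => ?_⟩
  rw [← Ideal.Quotient.eq, IsAdicComplete.mk_liftRingHom, hg]

section DecayIdeal

variable {A : Type*} [CommRing A]

/-- The ideal of elements whose values under `w k` decay, along a fixed nonprincipal ultrafilter,
faster than every power of `c ^ g k`. -/
noncomputable def decayIdeal (w : ℕ → Valuation A NNReal) (hw : ∀ k a, w k a ≤ 1)
    (c : NNReal) (g : ℕ → ℕ) : Ideal A where
  carrier := {a | ∀ C : ℕ, ∀ᶠ k in (Filter.hyperfilter ℕ : Filter ℕ), w k a ≤ c ^ (C * g k)}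
  zero_mem' := fun C => by simp
  add_mem' := fun {a b} ha hb C => by
    filter_upwards [ha C, hb C] with k h1 h2
    exact ((w k).map_add a b).trans (max_le h1 h2)
  smul_mem' := fun a b hb C => by
    filter_upwards [hb C] with k h
    rw [smul_eq_mul, map_mul]
    exact (mul_le_of_le_one_left' (hw k a)).trans h

variable {w : ℕ → Valuation A NNReal} {hw : ∀ k a, w k a ≤ 1} {c : NNReal} {g g' : ℕ → ℕ}

lemma mem_decayIdeal {a : A} : a ∈ decayIdeal w hw c g ↔
    ∀ C : ℕ, ∀ᶠ k in (Filter.hyperfilter ℕ : Filter ℕ), w k a ≤ c ^ (C * g k) := Iff.rfl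

lemma decayIdeal_isPrime (hc : c < 1) (hg : ∀ᶠ k in Filter.cofinite, 0 < g k) :
    (decayIdeal w hw c g).IsPrime := by
  rw [Ideal.isPrime_iff]
  refine ⟨fun h => ?_, fun {a b} hab => ?_⟩
  · have h1 := mem_decayIdeal.1 ((Ideal.eq_top_iff_one _).1 h) 1
    obtain ⟨k, hk, hk'⟩ := (h1.and (Filter.hyperfilter_le_cofinite hg)).exists
    rw [map_one, one_mul] at hk
    exact absurd hk (not_le.2 (pow_lt_one₀ zero_le hc hk'.ne'))
  · by_contra! hcon
    obtain ⟨ha, hb⟩ := hcon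
    simp only [mem_decayIdeal, not_forall] at ha hb
    obtain ⟨C, hC⟩ := ha
    obtain ⟨D, hD⟩ := hb
    rw [← Ultrafilter.eventually_not] at hC hD
    obtain ⟨k, ⟨h1, h2⟩, h3⟩ := ((hC.and hD).and (mem_decayIdeal.1 hab (C + D))).exists
    rw [map_mul, add_mul, pow_add] at h3
    exact absurd h3 (not_le.2 (mul_lt_mul'' (not_le.1 h1) (not_le.1 h2) zero_le zero_le))

lemma decayIdeal_mono (hc : c ≤ 1) (h : g' ≤ g) :
    decayIdeal w hw c g ≤ decayIdeal w hw c g' := fun a ha C => by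
  filter_upwards [mem_decayIdeal.1 ha C] with k hk
  exact hk.trans (pow_le_pow_right_of_le_one' hc (Nat.mul_le_mul_left C (h k)))

/-- An element with value exactly `c ^ (g k + 1)` separates the decay ideals of `g` and of any
`g'` of smaller order of growth. -/
lemma decayIdeal_lt (hc0 : 0 < c) (hc : c < 1) (hgg' : g' ≤ g)
    (hg : ∀ᶠ k in Filter.cofinite, 1 < g k)
    (hlittle : ∀ C : ℕ, ∀ᶠ k in Filter.cofinite, C * g' k ≤ g k) {a : A}
    (ha : ∀ᶠ k in Filter.cofinite, w k a = c ^ (g k + 1)) :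
    decayIdeal w hw c g < decayIdeal w hw c g' := by
  refine lt_of_le_of_ne (decayIdeal_mono hc.le hgg') fun heq => ?_
  have hmem : a ∈ decayIdeal w hw c g' := fun C => by
    filter_upwards [Filter.hyperfilter_le_cofinite (hlittle C),
      Filter.hyperfilter_le_cofinite ha] with k h1 h2
    rw [h2]
    exact pow_le_pow_right_of_le_one' hc.le (by omega)
  rw [← heq] at hmem
  obtain ⟨k, ⟨h1, h2⟩, h3⟩ := (((mem_decayIdeal.1 hmem 2).and
    (Filter.hyperfilter_le_cofinite ha)).and (Filter.hyperfilter_le_cofinite hg)).exists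
  rw [h2] at h1
  exact absurd h1 (not_le.2 (pow_lt_pow_right_of_lt_one₀ hc0 hc (by omega)))

end DecayIdeal

section Growth

/-- Integer sequences of growth order `k ^ (2 - l)`, with increments at least `2`. -/
noncomputable def growth (l : ℝ) (k : ℕ) : ℕ := 2 * k + ⌈(k : ℝ) ^ (2 - l)⌉₊

variable {l m : ℝ}

lemma growth_add_two_le (hl : l < 2) {j k : ℕ} (h : j < k) : growth l j + 2 ≤ growth l k := by
  have : ⌈(j : ℝ) ^ (2 - l)⌉₊ ≤ ⌈(k : ℝ) ^ (2 - l)⌉₊ := Nat.ceil_mono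
    (Real.rpow_le_rpow (by positivity) (by exact_mod_cast h.le) (by linarith))
  unfold growth
  omega

lemma le_growth (l : ℝ) (k : ℕ) : 2 * k ≤ growth l k := by
  unfold growth
  omega

lemma growth_le (hl : 0 ≤ l) {k : ℕ} (hk : 1 ≤ k) : growth l k ≤ 2 * k + k ^ 2 := by
  unfold growth
  gcongr
  rw [Nat.ceil_le]
  push_cast
  rw [← Real.rpow_natCast]
  exact Real.rpow_le_rpow_of_exponent_le (by exact_mod_cast hk) (by push_cast; linarith)

lemma growth_add_two_le_pow (hl : 0 ≤ l) {p : ℕ} (hp : 2 ≤ p) {k : ℕ} (hk : 1 ≤ k) :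
    growth l k + 2 ≤ p ^ (4 * k) := by
  have h1 := growth_le hl hk
  have h2 : k + 1 ≤ 2 ^ k := Nat.lt_two_pow_self
  have h3 : 2 ≤ 2 ^ k := by simpa using Nat.pow_le_pow_right (n := 2) (by norm_num) hk
  calc growth l k + 2 ≤ (k + 1) ^ 2 * 2 ^ 2 := by nlinarith
    _ ≤ (2 ^ k) ^ 2 * (2 ^ k) ^ 2 := by gcongr
    _ = 2 ^ (4 * k) := by ring
    _ ≤ p ^ (4 * k) := by gcongr

lemma growth_antitone (hlm : l ≤ m) (hm : m < 2) : growth m ≤ growth l := by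
  intro k
  unfold growth
  rcases Nat.eq_zero_or_pos k with rfl | hk
  · simp [Real.zero_rpow (show (2 - m) ≠ 0 by linarith)]
  · gcongr
    · exact_mod_cast hk

lemma isLittleO_rpow_rpow_atTop {a b : ℝ} (h : a < b) :
    (fun x : ℝ => x ^ a) =o[Filter.atTop] fun x : ℝ => x ^ b := by
  refine Asymptotics.isLittleO_of_tendsto' ?_ ?_
  · filter_upwards [Filter.eventually_gt_atTop 0] with x hx hx0
    exact absurd hx0 (Real.rpow_pos_of_pos hx b).ne'
  · refine (tendsto_rpow_neg_atTop (sub_pos.2 h)).congr' ?_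
    filter_upwards [Filter.eventually_gt_atTop 0] with x hx
    rw [← Real.rpow_sub hx, neg_sub]

lemma growth_isLittleO (hlm : l < m) (hl : l < 1) (C : ℕ) :
    ∀ᶠ k in Filter.cofinite, C * growth m k ≤ growth l k := by
  have h1 : (fun x : ℝ => x ^ (2 - m)) =o[Filter.atTop] fun x => x ^ (2 - l) :=
    isLittleO_rpow_rpow_atTop (by linarith)
  have h2 : (fun x : ℝ => x ^ (1 : ℝ)) =o[Filter.atTop] fun x => x ^ (2 - l) :=
    isLittleO_rpow_rpow_atTop (by linarith)
  have h3 : (fun x : ℝ => x ^ (0 : ℝ)) =o[Filter.atTop] fun x => x ^ (2 - l) :=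
    isLittleO_rpow_rpow_atTop (by linarith)
  have h := ((h1.add (h2.const_mul_left 2)).add h3).comp_tendsto
    (tendsto_natCast_atTop_atTop (R := ℝ))
  have hC : (0 : ℝ) < 1 / (C + 1) := by positivity
  rw [Nat.cofinite_eq_atTop]
  filter_upwards [h.bound hC] with k hk
  simp only [Function.comp_apply, Real.rpow_one, Real.rpow_zero] at hk
  have e1 : (growth m k : ℝ) ≤ k ^ (2 - m) + 2 * k + 1 := by
    unfold growth
    push_cast
    linarith [Nat.ceil_lt_add_one (show (0 : ℝ) ≤ (k : ℝ) ^ (2 - m) by positivity)]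
  have e2 : (k : ℝ) ^ (2 - l) ≤ growth l k := by
    unfold growth
    push_cast
    linarith [Nat.le_ceil ((k : ℝ) ^ (2 - l)), (Nat.cast_nonneg k : (0 : ℝ) ≤ k)]
  rw [Real.norm_of_nonneg (by positivity), Real.norm_of_nonneg (by positivity),
    div_mul_eq_mul_div, one_mul, le_div_iff₀ (by positivity)] at hk
  have e3 : (C : ℝ) * growth m k ≤ growth l k := by
    have : (0 : ℝ) ≤ growth m k := by positivity
    nlinarith [(Nat.cast_nonneg C : (0 : ℝ) ≤ C)]
  exact_mod_cast e3

end Growth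

section Lacunary

/-- A lacunary sequence of exponents. -/
def lacunary (k : ℕ) : ℕ := 2 * (k * (k + 1))

lemma lacunary_add_le {j k : ℕ} (h : j < k) : lacunary j + 4 * k ≤ lacunary k := by
  unfold lacunary
  obtain ⟨d, rfl⟩ := Nat.exists_eq_add_of_lt h
  nlinarith

/-- The exponent `p ^ (-n)`. -/
def pPowRat.invPow (p n : ℕ) : pPowRat p :=
  ⟨((p : ℚ) ^ n)⁻¹, by positivity, n, if p ^ n = 0 then 0 else 1, by
    split_ifs with h
    · simp [show (p : ℚ) ^ n = 0 by exact_mod_cast h]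
    · rw [mul_inv_cancel₀ (by exact_mod_cast h)]; simp⟩

variable {p : ℕ} {K : Type*} [Field K] (v : Valuation K NNReal)

/-- The partial sums of the lacunary series `∑ π ^ growth l j * x ^ (1 / p ^ lacunary j)`. -/
noncomputable def lacunarySeries (p : ℕ) (π : v.integer) (l : ℝ) (N : ℕ) :
    AddMonoidAlgebra v.integer (pPowRat p) :=
  ∑ j ∈ Finset.range N,
    AddMonoidAlgebra.single (pPowRat.invPow p (lacunary j)) (π ^ growth l j)

/-- If `y j` is a `p ^ lacunary j`-th root of `π ^ p ^ lacunary k`, then the `k`-th term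
dominates the lacunary series with `x ^ (1 / p ^ lacunary j)` specialized to `y j`. -/
lemma valuation_lacunary_sum (hp : 2 ≤ p) {π : v.integer} (hπ0 : 0 < v (π : K))
    (hπ1 : v (π : K) < 1) {l : ℝ} (hl0 : 0 ≤ l) (hl : l < 2) {k N : ℕ} (hk : 1 ≤ k) (hN : k < N)
    (y : ℕ → v.integer) (hy : ∀ j, y j ^ p ^ lacunary j = π ^ p ^ lacunary k) :
    v ((∑ j ∈ Finset.range N, π ^ growth l j * y j : v.integer) : K) =
      v (π : K) ^ (growth l k + 1) := by
  have hp0 (n : ℕ) : p ^ n ≠ 0 := pow_ne_zero _ (by omega)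
  have hvy (j : ℕ) : v (y j : K) ^ p ^ lacunary j = v (π : K) ^ p ^ lacunary k := by
    have := congrArg (fun z : v.integer => v (z : K)) (hy j)
    simpa using this
  have hkk : v (y k : K) = v (π : K) := (pow_left_inj₀ zero_le zero_le (hp0 _)).1 (hvy k)
  have hmain : v ((π : K) ^ growth l k * y k) = v (π : K) ^ (growth l k + 1) := by
    rw [map_mul, map_pow, hkk, pow_succ]
  push_cast
  rw [← hmain]
  refine v.map_sum_eq_of_lt (f := fun j => (π : K) ^ growth l j * y j)
    (Finset.mem_range.2 hN) fun j hj => ?_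
  have hjk : j ≠ k := by simpa using (Finset.mem_sdiff.1 hj).2
  rw [hmain, map_mul, map_pow]
  have hlt : v (π : K) ^ (growth l k + 2) < v (π : K) ^ (growth l k + 1) :=
    pow_lt_pow_right_of_lt_one₀ hπ0 hπ1 (by omega)
  refine lt_of_le_of_lt ?_ hlt
  rcases lt_or_gt_of_ne hjk with h | h
  · have h1 := lacunary_add_le h
    have hyj : v (y j : K) = v (π : K) ^ p ^ (lacunary k - lacunary j) := by
      refine (pow_left_inj₀ zero_le zero_le (hp0 (lacunary j))).1 ?_
      rw [hvy, ← pow_mul, ← pow_add]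
      congr 2
      omega
    rw [hyj]
    refine (mul_le_of_le_one_left' (pow_le_one' hπ1.le _)).trans ?_
    refine pow_le_pow_right_of_le_one' hπ1.le ?_
    exact (growth_add_two_le_pow hl0 hp hk).trans
      (Nat.pow_le_pow_right (by omega) (by omega))
  · exact (mul_le_of_le_one_right' (y j).2).trans
      (pow_le_pow_right_of_le_one' hπ1.le (growth_add_two_le hl h))

end Lacunary

/-- the integral perfectoid Tate algebra `O_K⟨x^{1/p^∞}⟩` over a perfectoid
field `K` of characteristic `p` has a strictly increasing chain of prime ideals indexed by
the real interval `(0,1)`; in particular it has uncountable Krull dimension. -/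
theorem integralPerfectoidTateAlgebra_char_p_uncountable_chain_of_primes
    (p : ℕ) (hp : p.Prime) (K : Type) [Field K] [CharP K p]
    (v : Valuation K NNReal)
    (hnontriv : ∃ x : K, 0 < v x ∧ v x < 1)
    (hcomplete : ∀ f : ℕ → K,
      (∀ ε : NNReal, 0 < ε → ∃ N : ℕ, ∀ m ≥ N, ∀ n ≥ N, v (f m - f n) < ε) →
      ∃ L : K, ∀ ε : NNReal, 0 < ε → ∃ N : ℕ, ∀ n ≥ N, v (f n - L) < ε)
    (hperf : Function.Bijective (fun x : K => x ^ p))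
    (π : v.integer) (hπ0 : 0 < v (π : K)) (hπ1 : v (π : K) < 1) :
    ∃ P : Set.Ioo (0 : ℝ) 1 →
        Ideal (AdicCompletion
          (Ideal.span {algebraMap v.integer
            (AddMonoidAlgebra v.integer (pPowRat p)) π})
          (AddMonoidAlgebra v.integer (pPowRat p))),
      (∀ l, (P l).IsPrime) ∧
      ∀ l m : Set.Ioo (0 : ℝ) 1, (l : ℝ) < (m : ℝ) → P l < P m := by
  classical
  let R := AddMonoidAlgebra v.integer (pPowRat p)
  let I : Ideal R := Ideal.span {algebraMap v.integer R π}
  let J : Ideal v.integer := Ideal.span {π}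
  have : IsAdicComplete J v.integer := isAdicComplete_valuation_integer v hcomplete hπ0 hπ1
  choose χ hχ using fun k : ℕ => exists_fractionalPower v hp hperf (π ^ p ^ lacunary k)
  let φ (k : ℕ) : R →ₐ[v.integer] v.integer :=
    AddMonoidAlgebra.lift v.integer v.integer (pPowRat p) (χ k)
  have hφ (k : ℕ) : I ≤ J.comap (φ k : R →+* v.integer) := by
    rw [Ideal.span_le, Set.singleton_subset_iff]
    simp only [SetLike.mem_coe, Ideal.mem_comap, RingHom.coe_coe, AlgHom.commutes]
    exact Ideal.mem_span_singleton_self π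
  choose F hF using fun k => exists_ringHom_adicCompletion I J (φ k : R →+* v.integer) (hφ k)
  let w (k : ℕ) : Valuation (AdicCompletion I R) NNReal :=
    v.comap (v.integer.subtype.comp (F k))
  have hw (k : ℕ) (a : AdicCompletion I R) : w k a ≤ 1 := (F k a).2
  have hpos (l : ℝ) : ∀ᶠ k in Filter.cofinite, 1 < growth l k := by
    rw [Nat.cofinite_eq_atTop]
    filter_upwards [Filter.eventually_ge_atTop 1] with k hk
    have := le_growth l k
    omega
  refine ⟨fun l => decayIdeal w hw (v (π : K)) (growth l), fun l =>
    decayIdeal_isPrime hπ1 ((hpos l).mono fun k hk => by omega), fun l m hlm => ?_⟩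
  have hl2 : (l : ℝ) < 2 := l.2.2.trans (by norm_num)
  have hm2 : (m : ℝ) < 2 := m.2.2.trans (by norm_num)
  let f : AdicCompletion.AdicCauchySequence I R :=
    AdicCompletion.AdicCauchySequence.mk I R (lacunarySeries v p π l) fun n => by
      rw [SModEq.comm, SModEq.sub_mem, smul_eq_mul, Ideal.mul_top, Ideal.span_singleton_pow,
        lacunarySeries, lacunarySeries, Finset.sum_range_succ, add_sub_cancel_left,
        Ideal.mem_span_singleton]
      refine (pow_dvd_pow _ (show n ≤ growth l n by have := le_growth l n; omega)).trans ?_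
      rw [← map_pow]
      refine ⟨AddMonoidAlgebra.single (pPowRat.invPow p (lacunary n)) 1, ?_⟩
      rw [← Algebra.smul_def, AddMonoidAlgebra.smul_single, smul_eq_mul, mul_one]
  refine decayIdeal_lt hπ0 hπ1 (growth_antitone hlm.le hm2) (hpos l)
    (growth_isLittleO hlm l.2.2) (a := AdicCompletion.mk I R f) ?_
  rw [Nat.cofinite_eq_atTop]
  filter_upwards [Filter.eventually_ge_atTop 1] with k hk
  let N := growth l k + 2
  have hkN : k < N := by
    have := le_growth l k
    omega
  have hsum : v ((φ k (f N) : v.integer) : K) = v (π : K) ^ (growth l k + 1) := by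
    have hfN : φ k (f N) = ∑ j ∈ Finset.range N, π ^ growth l j *
        χ k (Multiplicative.ofAdd (pPowRat.invPow p (lacunary j))) := by
      change φ k (lacunarySeries v p π l N) = _
      rw [lacunarySeries, map_sum]
      exact Finset.sum_congr rfl fun j _ => AddMonoidAlgebra.lift_single _ _ _
    rw [hfN]
    refine valuation_lacunary_sum v hp.two_le hπ0 hπ1 l.2.1.le hl2 hk hkN _ fun j => ?_
    have hp0 : (p : ℚ) ≠ 0 := by exact_mod_cast hp.ne_zero
    simpa using hχ k (pPowRat.invPow p (lacunary j)) (lacunary j) 1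
      (by simp [pPowRat.invPow, hp0])
  have herr : v ((F k (AdicCompletion.mk I R f) - φ k (f N) : v.integer) : K) <
      v ((φ k (f N) : v.integer) : K) := by
    rw [hsum]
    refine ((mem_span_singleton_pow_iff_valuation_le v hπ0 N _).1 (hF k f N)).trans_lt ?_
    exact pow_lt_pow_right_of_lt_one₀ hπ0 hπ1 (by omega)
  change v ((F k (AdicCompletion.mk I R f) : v.integer) : K) = _
  rw [← hsum, ← v.map_add_eq_of_lt_left herr]
  push_cast
  congr 1
  ring
end

section
/- Let p be a prime, n ≥ 1 a natural number, and let K be a perfectoid field of characteristic p with ring of integers O_K and pseudo-uniformizer π. Then the n-variable integral perfectoid Tate algebra O_K⟨x_1^{1/p^∞}, …, x_n^{1/p^∞}⟩ — the π-adic completion of the monoid algebra AddMonoidAlgebra O_K (Fin n → M) — admits a family (𝔭_λ)_{λ∈(0,1)} of prime ideals, indexed by the real interval (0,1), with 𝔭_λ ⊊ 𝔭_μ whenever λ < μ; in particular it has uncountable Krull dimension. -/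
set_option synthInstance.maxHeartbeats 1000000
set_option maxHeartbeats 1000000

open Filter Topology

namespace AddMonoidAlgebra

variable {R M : Type*} [CommRing R] [AddCommMonoid M]

/-- The Gauss norm `sup_i w(a_i) χ(i)` of `∑ a_i x^i`, weighted by a multiplicative character. -/
noncomputable def weightedGaussNorm (w : Valuation R NNReal) (χ : Multiplicative M →* NNReal)
    (f : AddMonoidAlgebra R M) : NNReal :=
  f.coeff.support.sup fun i => w (f.coeff i) * χ (.ofAdd i)

variable {w : Valuation R NNReal} {χ : Multiplicative M →* NNReal}

theorem weightedGaussNorm_le_iff {f : AddMonoidAlgebra R M} {δ : NNReal} :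
    weightedGaussNorm w χ f ≤ δ ↔ ∀ i, w (f.coeff i) * χ (.ofAdd i) ≤ δ := by
  refine Finset.sup_le_iff.trans ⟨fun h i => ?_, fun h i _ => h i⟩
  by_cases hi : i ∈ f.coeff.support
  · exact h i hi
  · simp [Finsupp.notMem_support_iff.mp hi]

theorem le_weightedGaussNorm (f : AddMonoidAlgebra R M) (i : M) :
    w (f.coeff i) * χ (.ofAdd i) ≤ weightedGaussNorm w χ f :=
  weightedGaussNorm_le_iff.mp le_rfl i

theorem weightedGaussNorm_add_le (f g : AddMonoidAlgebra R M) :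
    weightedGaussNorm w χ (f + g) ≤ max (weightedGaussNorm w χ f) (weightedGaussNorm w χ g) := by
  refine weightedGaussNorm_le_iff.mpr fun i => ?_
  calc w ((f + g).coeff i) * χ (.ofAdd i)
      ≤ max (w (f.coeff i)) (w (g.coeff i)) * χ (.ofAdd i) := by
        gcongr
        exact w.map_add _ _
    _ = max (w (f.coeff i) * χ (.ofAdd i)) (w (g.coeff i) * χ (.ofAdd i)) :=
        max_mul_of_nonneg _ _ zero_le
    _ ≤ _ := max_le_max (le_weightedGaussNorm f i) (le_weightedGaussNorm g i)

theorem weightedGaussNorm_single (i : M) (r : R) :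
    weightedGaussNorm w χ (single i r) = w r * χ (.ofAdd i) := by
  classical
  refine le_antisymm (weightedGaussNorm_le_iff.mpr fun j => ?_) ?_
  · rw [coeff_single, Finsupp.single_apply]
    split_ifs with h
    · rw [h]
    · simp
  · simpa using le_weightedGaussNorm (w := w) (χ := χ) (single i r) i

theorem weightedGaussNorm_mul_le (f g : AddMonoidAlgebra R M) :
    weightedGaussNorm w χ (f * g) ≤ weightedGaussNorm w χ f * weightedGaussNorm w χ g := by
  classical
  refine weightedGaussNorm_le_iff.mpr fun i => ?_
  obtain h0 | h0 := eq_or_ne (χ (.ofAdd i)) 0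
  · simp [h0]
  rw [← le_div_iff₀ (pos_iff_ne_zero.mpr h0), coeff_mul]
  refine w.map_sum_le fun a _ => w.map_sum_le fun b _ => ?_
  dsimp only
  split_ifs with hab
  · rw [le_div_iff₀ (pos_iff_ne_zero.mpr h0), ← hab, ofAdd_add, map_mul, map_mul,
      mul_mul_mul_comm]
    exact mul_le_mul' (le_weightedGaussNorm f a) (le_weightedGaussNorm g b)
  · simp

theorem exists_eq_weightedGaussNorm {f : AddMonoidAlgebra R M}
    (hf : weightedGaussNorm w χ f ≠ 0) :
    ∃ i ∈ f.coeff.support, w (f.coeff i) * χ (.ofAdd i) = weightedGaussNorm w χ f := by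
  have hne : f.coeff.support.Nonempty := by
    rw [Finset.nonempty_iff_ne_empty]
    intro h
    exact hf (by simp [weightedGaussNorm, h])
  obtain ⟨i, hi, h⟩ := Finset.exists_mem_eq_sup _ hne fun i => w (f.coeff i) * χ (.ofAdd i)
  exact ⟨i, hi, h.symm⟩

theorem le_weightedGaussNorm_mul [UniqueSums M] (f g : AddMonoidAlgebra R M) :
    weightedGaussNorm w χ f * weightedGaussNorm w χ g ≤ weightedGaussNorm w χ (f * g) := by
  classical
  obtain hf | hf := eq_or_ne (weightedGaussNorm w χ f) 0
  · simp [hf]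
  obtain hg | hg := eq_or_ne (weightedGaussNorm w χ g) 0
  · simp [hg]
  have hne {h : AddMonoidAlgebra R M} (hh : weightedGaussNorm w χ h ≠ 0) :
      (h.coeff.support.filter
        fun i => w (h.coeff i) * χ (.ofAdd i) = weightedGaussNorm w χ h).Nonempty :=
    let ⟨i, hi, hi'⟩ := exists_eq_weightedGaussNorm hh
    ⟨i, Finset.mem_filter.mpr ⟨hi, hi'⟩⟩
  obtain ⟨a, ha, b, hb, hab⟩ := UniqueSums.uniqueAdd_of_nonempty (hne hf) (hne hg)
  rw [Finset.mem_filter] at ha hb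
  have hprod : w (f.coeff a * g.coeff b) * χ (.ofAdd (a + b)) =
      weightedGaussNorm w χ f * weightedGaussNorm w χ g := by
    rw [← ha.2, ← hb.2, ofAdd_add, map_mul, map_mul, mul_mul_mul_comm]
  have hpos : 0 < w (f.coeff a * g.coeff b) * χ (.ofAdd (a + b)) :=
    hprod ▸ pos_iff_ne_zero.mpr (mul_ne_zero hf hg)
  have hχ : 0 < χ (.ofAdd (a + b)) := pos_of_mul_pos_right hpos zero_le
  have hw : 0 < w (f.coeff a * g.coeff b) := pos_of_mul_pos_left hpos zero_le
  refine le_trans (le_of_eq ?_) (le_weightedGaussNorm (f * g) (a + b))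
  rw [← hprod]
  congr 1
  rw [coeff_mul]
  simp only [Finsupp.sum, ← Finset.sum_product']
  rw [← Finset.add_sum_erase _ _ (Finset.mk_mem_product ha.1 hb.1), if_pos rfl]
  refine (Valuation.map_add_eq_of_lt_left _ (Valuation.map_sum_lt _ hw.ne' ?_)).symm
  rintro ⟨c, d⟩ hcd
  dsimp only
  split_ifs with hsum
  · rw [Finset.mem_erase, Finset.mem_product] at hcd
    refine lt_of_mul_lt_mul_right ?_ hχ.le
    rw [hprod, ← hsum, ofAdd_add, map_mul, map_mul, mul_mul_mul_comm]
    refine lt_of_le_of_ne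
      (mul_le_mul' (le_weightedGaussNorm f c) (le_weightedGaussNorm g d)) fun heq => hcd.1 ?_
    have hc : w (f.coeff c) * χ (.ofAdd c) = weightedGaussNorm w χ f := by
      by_contra h
      exact (mul_lt_mul ((le_weightedGaussNorm f c).lt_of_ne h) (le_weightedGaussNorm g d)
        (pos_iff_ne_zero.mpr (right_ne_zero_of_mul (heq ▸ mul_ne_zero hf hg))) zero_le).ne heq
    have hd : w (g.coeff d) * χ (.ofAdd d) = weightedGaussNorm w χ g := by
      by_contra h
      rw [hc] at heq
      exact (mul_lt_mul_of_pos_left ((le_weightedGaussNorm g d).lt_of_ne h)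
        (pos_iff_ne_zero.mpr hf)).ne heq
    exact Prod.ext_iff.mpr
      (hab (Finset.mem_filter.mpr ⟨hcd.2.1, hc⟩) (Finset.mem_filter.mpr ⟨hcd.2.2, hd⟩) hsum)
  · simpa using hw

variable (w χ) in
/-- The weighted Gauss norm as a valuation on the monoid algebra. -/
noncomputable def weightedGaussValuation [UniqueSums M] :
    Valuation (AddMonoidAlgebra R M) NNReal where
  toFun := weightedGaussNorm w χ
  map_zero' := by simp [weightedGaussNorm]
  map_one' := by
    rw [one_def, weightedGaussNorm_single, map_one, ofAdd_zero, map_one, one_mul]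
  map_mul' f g := le_antisymm (weightedGaussNorm_mul_le f g) (le_weightedGaussNorm_mul f g)
  map_add_le_max' := weightedGaussNorm_add_le

end AddMonoidAlgebra

namespace Valuation

variable {R : Type*} [CommRing R]

theorem dist_le (w : Valuation R NNReal) (x y : R) : dist (w x) (w y) ≤ w (x - y) := by
  have key (a b : R) : (w a : ℝ) - w b ≤ w (a - b) := by
    have h := w.map_add (a - b) b
    rw [sub_add_cancel] at h
    have h' : w a ≤ w (a - b) + w b := h.trans (max_le_add_of_nonneg zero_le zero_le)
    exact sub_le_iff_le_add.mpr (by exact_mod_cast h')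
  rw [NNReal.dist_eq, abs_le]
  have h := key y x
  rw [map_sub_swap] at h
  exact ⟨by linarith, key x y⟩

end Valuation

namespace AdicCompletion

variable {R : Type*} [CommRing R] {I : Ideal R} {w : Valuation R NNReal} {c : NNReal}

theorem exists_tendsto_valuation (hc : c < 1) (hw : ∀ n, ∀ x ∈ I ^ n, w x ≤ c ^ n)
    (F : AdicCompletion I R) :
    ∃ r : NNReal, ∀ a : AdicCauchySequence I R, mk I R a = F →
      Tendsto (fun n => w (a n)) atTop (𝓝 r) := by
  obtain ⟨a, rfl⟩ := mk_surjective I R F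
  have hcauchy : CauchySeq fun n => w (a n) := by
    refine cauchySeq_of_le_geometric c 1 (by exact_mod_cast hc) fun n => ?_
    refine (w.dist_le _ _).trans ?_
    have h := SModEq.sub_mem.mp (a.2 n.le_succ)
    rw [one_mul]
    exact_mod_cast hw n _ (by simpa using h)
  obtain ⟨r, hr⟩ := cauchySeq_tendsto_of_complete hcauchy
  refine ⟨r, fun b hb => tendsto_of_tendsto_of_dist hr ?_⟩
  refine squeeze_zero (fun _ => dist_nonneg) (g := fun n => (c : ℝ) ^ n) (fun n => ?_)
    (tendsto_pow_atTop_nhds_zero_of_lt_one c.2 (by exact_mod_cast hc))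
  refine (w.dist_le _ _).trans ?_
  have h := congrArg (evalₐ I n) hb
  rw [evalₐ_mk, evalₐ_mk] at h
  exact_mod_cast hw n _ (Ideal.Quotient.eq.mp h.symm)

/-- The continuous extension of a valuation to the adic completion. -/
noncomputable def extendValuation (hc : c < 1) (hw : ∀ n, ∀ x ∈ I ^ n, w x ≤ c ^ n) :
    Valuation (AdicCompletion I R) NNReal :=
  have key (a : AdicCauchySequence I R) := (exists_tendsto_valuation hc hw (mk I R a)).choose_spec
  { toFun F := (exists_tendsto_valuation hc hw F).choose
    map_zero' := tendsto_nhds_unique (key 0 0 rfl) (by simp)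
    map_one' := tendsto_nhds_unique (key 1 1 rfl) (by simp)
    map_mul' F G := by
      obtain ⟨a, rfl⟩ := mk_surjective I R F
      obtain ⟨b, rfl⟩ := mk_surjective I R G
      refine tendsto_nhds_unique (key (a * b) (a * b) rfl) ?_
      simpa using (key a a rfl).mul (key b b rfl)
    map_add_le_max' F G := by
      obtain ⟨a, rfl⟩ := mk_surjective I R F
      obtain ⟨b, rfl⟩ := mk_surjective I R G
      exact le_of_tendsto_of_tendsto' (key (a + b) (a + b) rfl)
        ((key a a rfl).max (key b b rfl)) fun n => w.map_add (a n) (b n) }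

theorem tendsto_extendValuation (hc : c < 1) (hw : ∀ n, ∀ x ∈ I ^ n, w x ≤ c ^ n)
    (a : AdicCauchySequence I R) :
    Tendsto (fun n => w (a n)) atTop (𝓝 (extendValuation hc hw (mk I R a))) :=
  (exists_tendsto_valuation hc hw (mk I R a)).choose_spec a rfl

end AdicCompletion

section GrowthIdeal

variable {B : Type*} [CommRing B] {u : ℕ → Valuation B NNReal} {c : NNReal}

/-- The elements `x` such that, along the ultrafilter `U`, the logarithm of `u j x` in base `c`
dominates every multiple of `t j`. -/
def growthIdeal (hu : ∀ j x, u j x ≤ 1) (c : NNReal) (U : Ultrafilter ℕ) (t : ℕ → ℕ) : Ideal B where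
  carrier := {x | ∀ N : ℕ, ∀ᶠ j in U, u j x ≤ c ^ (N * t j)}
  zero_mem' N := by simp
  add_mem' {x y} hx hy N := by
    filter_upwards [hx N, hy N] with j hxj hyj
    exact ((u j).map_add x y).trans (max_le hxj hyj)
  smul_mem' r x hx N := by
    filter_upwards [hx N] with j hxj
    rw [smul_eq_mul, map_mul]
    exact (mul_le_of_le_one_left zero_le (hu j r)).trans hxj

variable {hu : ∀ j x, u j x ≤ 1} {U : Ultrafilter ℕ} {t : ℕ → ℕ}

theorem mem_growthIdeal {x : B} :
    x ∈ growthIdeal hu c U t ↔ ∀ N : ℕ, ∀ᶠ j in U, u j x ≤ c ^ (N * t j) :=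
  Iff.rfl

theorem growthIdeal_isPrime (hc : c < 1) (ht : ∀ᶠ j in U, t j ≠ 0) :
    (growthIdeal hu c U t).IsPrime := by
  refine Ideal.isPrime_iff.mpr ⟨fun h => ?_, fun {x y} hxy => ?_⟩
  · have h1 : (1 : B) ∈ growthIdeal hu c U t := h ▸ Submodule.mem_top
    obtain ⟨j, hj, htj⟩ := ((h1 1).and ht).exists
    rw [map_one, one_mul] at hj
    exact (pow_lt_one' hc htj).not_ge hj
  · by_contra! h
    simp only [mem_growthIdeal, not_forall, ← Ultrafilter.eventually_not, not_le] at h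
    obtain ⟨⟨N, hN⟩, ⟨N', hN'⟩⟩ := h
    obtain ⟨j, hj, hNj, hNj'⟩ := ((hxy (N + N')).and (hN.and hN')).exists
    rw [map_mul, add_mul, pow_add] at hj
    exact (mul_lt_mul'' hNj hNj' zero_le zero_le).not_ge hj

end GrowthIdeal

section TateAlgebra

instance (p : ℕ) : UniqueSums (pPowRat p) :=
  UniqueSums.of_injective_addHom (pPowRat p).subtype.toAddHom Subtype.val_injective inferInstance

theorem inv_pow_mem_pPowRat (p : ℕ) (e : ℕ) : ((p : ℚ) ^ e)⁻¹ ∈ pPowRat p := by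
  refine ⟨by positivity, ?_⟩
  obtain h | h := eq_or_ne ((p : ℚ) ^ e) 0
  · exact ⟨0, 0, by simp [h]⟩
  · exact ⟨e, 1, by simp [h]⟩

variable {p n : ℕ} {K : Type*} [Field K] {v : Valuation K NNReal}

/-- The character `i ↦ ρ ^ (s * i k)` of the exponent monoid. -/
noncomputable def coordinateWeight (p : ℕ) (k : Fin n) {ρ : NNReal} (hρ : ρ ≠ 0) (s : ℝ) :
    Multiplicative (Fin n → pPowRat p) →* NNReal where
  toFun i := ρ ^ (s * ((i.toAdd k : ℚ) : ℝ))
  map_one' := by simp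
  map_mul' i j := by
    rw [← NNReal.rpow_add hρ]
    simp [mul_add]

theorem coordinateWeight_le_one (k : Fin n) {ρ : NNReal} (hρ : ρ ≠ 0) (hρ1 : ρ < 1) {s : ℝ}
    (hs : 0 ≤ s) (i : Multiplicative (Fin n → pPowRat p)) : coordinateWeight p k hρ s i ≤ 1 := by
  refine NNReal.rpow_le_one hρ1.le (mul_nonneg hs ?_)
  exact_mod_cast (i.toAdd k).2.1

/-- The Gauss valuation of the monoid algebra in which the `k`-th variable has norm `v π ^ s`. -/
noncomputable def tateGaussValuation (p : ℕ) (k : Fin n) {π : v.integer} (hπ0 : v (π : K) ≠ 0)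
    (s : ℝ) : Valuation (AddMonoidAlgebra v.integer (Fin n → pPowRat p)) NNReal :=
  AddMonoidAlgebra.weightedGaussValuation (v.comap v.integer.subtype)
    (coordinateWeight p k hπ0 s)

section Valuation

variable {k : Fin n} {π : v.integer} {hπ0 : v (π : K) ≠ 0} {s : ℝ}

theorem tateGaussValuation_single (i : Fin n → pPowRat p) (a : v.integer) :
    tateGaussValuation p k hπ0 s (.single i a) =
      v (a : K) * v (π : K) ^ (s * ((i k : ℚ) : ℝ)) :=
  AddMonoidAlgebra.weightedGaussNorm_single i a

theorem tateGaussValuation_le_one (hπ1 : v (π : K) < 1) (hs : 0 ≤ s)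
    (f : AddMonoidAlgebra v.integer (Fin n → pPowRat p)) :
    tateGaussValuation p k hπ0 s f ≤ 1 :=
  AddMonoidAlgebra.weightedGaussNorm_le_iff.mpr fun i =>
    mul_le_one' (f.coeff i).2 (coordinateWeight_le_one k hπ0 hπ1 hs _)

theorem tateGaussValuation_le_pow (hπ1 : v (π : K) < 1) (hs : 0 ≤ s) (m : ℕ)
    (f : AddMonoidAlgebra v.integer (Fin n → pPowRat p))
    (hf : f ∈ Ideal.span {algebraMap v.integer
      (AddMonoidAlgebra v.integer (Fin n → pPowRat p)) π} ^ m) :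
    tateGaussValuation p k hπ0 s f ≤ v (π : K) ^ m := by
  rw [Ideal.span_singleton_pow, Ideal.mem_span_singleton] at hf
  obtain ⟨g, rfl⟩ := hf
  rw [map_mul, map_pow, AddMonoidAlgebra.coe_algebraMap, Function.comp_apply,
    tateGaussValuation_single]
  simpa using mul_le_of_le_one_right zero_le (tateGaussValuation_le_one hπ1 hs g)

end Valuation

/-- The extension of `tateGaussValuation` to the integral perfectoid Tate algebra. -/
noncomputable def completedGaussValuation (p : ℕ) (k : Fin n) {π : v.integer}
    (hπ0 : v (π : K) ≠ 0) (hπ1 : v (π : K) < 1) (s : NNReal) :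
    Valuation (AdicCompletion (Ideal.span {algebraMap v.integer
      (AddMonoidAlgebra v.integer (Fin n → pPowRat p)) π})
      (AddMonoidAlgebra v.integer (Fin n → pPowRat p))) NNReal :=
  AdicCompletion.extendValuation (w := tateGaussValuation p k hπ0 s) hπ1
    (tateGaussValuation_le_pow hπ1 s.2)

variable {k : Fin n} {π : v.integer} (hπ0 : v (π : K) ≠ 0) (hπ1 : v (π : K) < 1)

theorem tendsto_completedGaussValuation (s : NNReal)
    (a : AdicCompletion.AdicCauchySequence (Ideal.span {algebraMap v.integer
      (AddMonoidAlgebra v.integer (Fin n → pPowRat p)) π})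
      (AddMonoidAlgebra v.integer (Fin n → pPowRat p))) :
    Tendsto (fun m => tateGaussValuation p k hπ0 s (a m)) atTop
      (𝓝 (completedGaussValuation p k hπ0 hπ1 s (AdicCompletion.mk _ _ a))) :=
  AdicCompletion.tendsto_extendValuation hπ1 (tateGaussValuation_le_pow hπ1 s.2) a

theorem completedGaussValuation_le_one (s : NNReal) (F) :
    completedGaussValuation p k hπ0 hπ1 s F ≤ 1 := by
  obtain ⟨a, rfl⟩ := AdicCompletion.mk_surjective _ _ F
  exact le_of_tendsto' (tendsto_completedGaussValuation hπ0 hπ1 s a) fun m =>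
    tateGaussValuation_le_one hπ1 s.2 _

variable (p k π) in
/-- The monomial `π ^ (p ^ d) * x_k ^ (1 / p ^ e)`. -/
noncomputable def rootMonomial (d e : ℕ) : AddMonoidAlgebra v.integer (Fin n → pPowRat p) :=
  .single (Pi.single k ⟨_, inv_pow_mem_pPowRat p e⟩) (π ^ p ^ d)

theorem tateGaussValuation_rootMonomial (s : ℝ) (d e : ℕ) :
    tateGaussValuation p k hπ0 s (rootMonomial p k π d e) =
      v (π : K) ^ p ^ d * v (π : K) ^ (s * ((p : ℝ) ^ e)⁻¹) := by
  rw [rootMonomial, tateGaussValuation_single]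
  simp

theorem coeff_rootMonomial_self (d e : ℕ) :
    (rootMonomial p k π d e).coeff (Pi.single k ⟨_, inv_pow_mem_pPowRat p e⟩) = π ^ p ^ d := by
  simp [rootMonomial]

theorem coeff_rootMonomial_of_ne (hp : p.Prime) {d e e' : ℕ} (h : e ≠ e') :
    (rootMonomial p k π d e).coeff (Pi.single k ⟨_, inv_pow_mem_pPowRat p e'⟩) = 0 := by
  classical
  rw [rootMonomial, AddMonoidAlgebra.coeff_single, Finsupp.single_apply, if_neg]
  rw [(Pi.single_injective k).eq_iff, Subtype.mk.injEq, inv_inj]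
  exact_mod_cast (Nat.pow_right_injective hp.two_le).ne h

theorem rootMonomial_mem {d m : ℕ} (h : m ≤ p ^ d) (e : ℕ) :
    rootMonomial p k π d e ∈ Ideal.span {algebraMap v.integer
      (AddMonoidAlgebra v.integer (Fin n → pPowRat p)) π} ^ m := by
  rw [Ideal.span_singleton_pow, Ideal.mem_span_singleton]
  refine (pow_dvd_pow _ h).trans ⟨.single (Pi.single k ⟨_, inv_pow_mem_pPowRat p e⟩) 1, ?_⟩
  rw [← map_pow, AddMonoidAlgebra.coe_algebraMap, Function.comp_apply,
    AddMonoidAlgebra.single_mul_single]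
  simp [rootMonomial]

/-- For slowly growing `d`, the series `∑ π ^ (p ^ d j) * x_k ^ (1 / p ^ (2 * j - d j))` converges
and its Gauss norms decay like `v π ^ (p ^ d j)`. -/
theorem exists_completedGaussValuation_bounds (hp : p.Prime) {d : ℕ → ℕ} (hmono : Monotone d)
    (hsucc : ∀ j, d (j + 1) ≤ d j + 1) (hle : ∀ j, d j ≤ j) {L : ℕ} (hL : ∀ j, j ≤ L * d j) :
    ∃ F, ∀ j, v (π : K) ^ (2 * p ^ d j) ≤
        completedGaussValuation p k hπ0 hπ1 ((p : NNReal) ^ (2 * j)) F ∧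
      completedGaussValuation p k hπ0 hπ1 ((p : NNReal) ^ (2 * j)) F ≤ v (π : K) ^ p ^ d j := by
  have hLpos : 0 < L := Nat.pos_of_ne_zero fun h => by simpa [h] using hL 1
  let e : ℕ → ℕ := fun j => 2 * j - d j
  have he : StrictMono e := strictMono_nat_of_lt_succ fun j => by
    have := hsucc j
    have := hle j
    have := hle (j + 1)
    simp only [e]
    omega
  have hp0 : (p : ℝ) ≠ 0 := by exact_mod_cast hp.ne_zero
  have hscale (j : ℕ) : (p : ℝ) ^ (2 * j) * ((p : ℝ) ^ e j)⁻¹ = (p ^ d j : ℕ) := by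
    have hj := hle j
    rw [← pow_sub₀ _ hp0 (by simp only [e]; omega),
      show 2 * j - e j = d j by simp only [e]; omega, Nat.cast_pow]
  let I := Ideal.span {algebraMap v.integer (AddMonoidAlgebra v.integer (Fin n → pPowRat p)) π}
  let T : ℕ → AddMonoidAlgebra v.integer (Fin n → pPowRat p) :=
    fun j => rootMonomial p k π (d j) (e j)
  let a : AdicCompletion.AdicCauchySequence I _ :=
    .mk I _ (fun m => ∑ j ∈ Finset.range (m * L), T j) fun m => by
      rw [SModEq.comm, SModEq.sub_mem, ← Finset.sum_Ico_eq_sub _ (by gcongr; omega)]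
      refine Submodule.sum_mem _ fun j hj => ?_
      rw [smul_eq_mul, Ideal.mul_top]
      refine rootMonomial_mem (le_trans ?_ (Nat.lt_pow_self hp.one_lt).le) _
      have h1 := (Finset.mem_Ico.mp hj).1
      exact Nat.le_of_mul_le_mul_left (by linarith [hL j]) hLpos
  refine ⟨AdicCompletion.mk I _ a, fun j => ⟨?_, ?_⟩⟩
  · refine ge_of_tendsto (tendsto_completedGaussValuation hπ0 hπ1 _ a) ?_
    filter_upwards [eventually_gt_atTop j] with m hm
    have hcoeff : (a m).coeff (Pi.single k ⟨_, inv_pow_mem_pPowRat p (e j)⟩) = π ^ p ^ d j := by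
      change (∑ i ∈ Finset.range (m * L), T i).coeff _ = _
      rw [AddMonoidAlgebra.coeff_sum, Finsupp.finsetSum_apply, Finset.sum_eq_single j]
      · exact coeff_rootMonomial_self _ _
      · exact fun i _ hij => coeff_rootMonomial_of_ne hp (he.injective.ne hij)
      · exact fun h =>
          absurd (Finset.mem_range.mpr (hm.trans_le (Nat.le_mul_of_pos_right m hLpos))) h
    have h := AddMonoidAlgebra.le_weightedGaussNorm (w := v.comap v.integer.subtype)
      (χ := coordinateWeight p k hπ0 ((p : ℝ) ^ (2 * j))) (a m)
      (Pi.single k ⟨_, inv_pow_mem_pPowRat p (e j)⟩)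
    rw [hcoeff] at h
    refine le_trans (le_of_eq ?_) (h.trans_eq ?_)
    · rw [two_mul, pow_add]
      simp [coordinateWeight, hscale, ← NNReal.rpow_natCast]
    · simp [tateGaussValuation, AddMonoidAlgebra.weightedGaussValuation]
  · refine le_of_tendsto' (tendsto_completedGaussValuation hπ0 hπ1 _ a) fun m => ?_
    refine (tateGaussValuation p k hπ0 _).map_sum_le fun i _ => ?_
    rw [tateGaussValuation_rootMonomial]
    obtain h | h := le_total j i
    · refine mul_le_of_le_one_right zero_le ?_ |>.trans
        (pow_le_pow_right_of_le_one' hπ1.le (Nat.pow_le_pow_right hp.pos (hmono h)))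
      exact NNReal.rpow_le_one hπ1.le (by positivity)
    · refine mul_le_of_le_one_left zero_le (pow_le_one' hπ1.le _) |>.trans ?_
      rw [← NNReal.rpow_natCast _ (p ^ d j), ← hscale]
      refine NNReal.rpow_le_rpow_of_exponent_ge (pos_iff_ne_zero.mpr hπ0) hπ1.le ?_
      push_cast
      have : (1 : ℝ) ≤ p := by exact_mod_cast hp.pos
      gcongr
      exact he.monotone h

end TateAlgebra

section CeilSlope

theorem ceil_slope_succ_le {r : ℝ} (hr0 : 0 ≤ r) (hr1 : r ≤ 1) (j : ℕ) :
    ⌈r * ((j + 1 : ℕ) : ℝ)⌉₊ ≤ ⌈r * (j : ℝ)⌉₊ + 1 := by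
  rw [← Nat.ceil_add_one (by positivity)]
  refine Nat.ceil_mono ?_
  push_cast
  linarith

theorem ceil_slope_le {r : ℝ} (hr1 : r ≤ 1) (j : ℕ) : ⌈r * (j : ℝ)⌉₊ ≤ j :=
  Nat.ceil_le.mpr (mul_le_of_le_one_left j.cast_nonneg hr1)

theorem ceil_slope_mono {r r' : ℝ} (h : r ≤ r') (j : ℕ) : ⌈r * (j : ℝ)⌉₊ ≤ ⌈r' * (j : ℝ)⌉₊ := by
  gcongr

theorem exists_le_mul_ceil_slope {r : ℝ} (hr : 0 < r) :
    ∃ L : ℕ, ∀ j : ℕ, j ≤ L * ⌈r * (j : ℝ)⌉₊ := by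
  obtain ⟨L, hL⟩ := exists_nat_ge r⁻¹
  refine ⟨L, fun j => ?_⟩
  have h : (j : ℝ) ≤ L * ⌈r * (j : ℝ)⌉₊ :=
    calc (j : ℝ) = r⁻¹ * (r * j) := (inv_mul_cancel_left₀ hr.ne' _).symm
      _ ≤ L * ⌈r * (j : ℝ)⌉₊ := mul_le_mul hL (Nat.le_ceil _) (by positivity) (by positivity)
  exact_mod_cast h

theorem eventually_mul_pow_ceil_slope_le {p : ℕ} (hp : 1 < p) {r r' : ℝ} (hr : 0 ≤ r)
    (h : r < r') (N : ℕ) :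
    ∀ᶠ j : ℕ in atTop, N * p ^ ⌈r * (j : ℝ)⌉₊ ≤ p ^ ⌈r' * (j : ℝ)⌉₊ := by
  have hlim := tendsto_natCast_atTop_atTop (R := ℝ) |>.const_mul_atTop (sub_pos.mpr h)
  filter_upwards [hlim.eventually_ge_atTop (N + 1 : ℝ)] with j hj
  have hceil : N + ⌈r * (j : ℝ)⌉₊ ≤ ⌈r' * (j : ℝ)⌉₊ := by
    have h1 := Nat.ceil_lt_add_one (mul_nonneg hr j.cast_nonneg)
    have h2 := Nat.le_ceil (r' * (j : ℝ))
    have h3 : ((N + ⌈r * (j : ℝ)⌉₊ : ℕ) : ℝ) ≤ (⌈r' * (j : ℝ)⌉₊ : ℕ) := by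
      push_cast
      linarith
    exact_mod_cast h3
  calc N * p ^ ⌈r * (j : ℝ)⌉₊ ≤ p ^ N * p ^ ⌈r * (j : ℝ)⌉₊ := by
        gcongr
        exact (Nat.lt_pow_self hp).le
    _ = p ^ (N + ⌈r * (j : ℝ)⌉₊) := (pow_add _ _ _).symm
    _ ≤ _ := Nat.pow_le_pow_right (by omega) hceil

end CeilSlope

/-- the `n`-variable integral perfectoid Tate algebra
`O_K⟨x₁^{1/p^∞}, …, x_n^{1/p^∞}⟩` over a perfectoid field `K` of characteristic `p`
has a strictly increasing chain of prime ideals indexed by the real interval `(0,1)`;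
in particular it has uncountable Krull dimension. -/
theorem integralPerfectoidTateAlgebra_multivariate_uncountable_chain_of_primes
    (p : ℕ) (hp : p.Prime) (n : ℕ) (hn : 1 ≤ n) (K : Type) [Field K] [CharP K p]
    (v : Valuation K NNReal)
    (hnontriv : ∃ x : K, 0 < v x ∧ v x < 1)
    (hcomplete : ∀ f : ℕ → K,
      (∀ ε : NNReal, 0 < ε → ∃ N : ℕ, ∀ m ≥ N, ∀ k ≥ N, v (f m - f k) < ε) →
      ∃ L : K, ∀ ε : NNReal, 0 < ε → ∃ N : ℕ, ∀ k ≥ N, v (f k - L) < ε)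
    (hperf : Function.Bijective (fun x : K => x ^ p))
    (π : v.integer) (hπ0 : 0 < v (π : K)) (hπ1 : v (π : K) < 1) :
    ∃ P : Set.Ioo (0 : ℝ) 1 →
        Ideal (AdicCompletion
          (Ideal.span {algebraMap v.integer
            (AddMonoidAlgebra v.integer (Fin n → pPowRat p)) π})
          (AddMonoidAlgebra v.integer (Fin n → pPowRat p))),
      (∀ l, (P l).IsPrime) ∧
      ∀ l m : Set.Ioo (0 : ℝ) 1, (l : ℝ) < (m : ℝ) → P l < P m := by
  have hπne := hπ0.ne'
  have hU : (hyperfilter ℕ : Filter ℕ) ≤ atTop := Nat.hyperfilter_le_atTop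
  refine ⟨fun l => growthIdeal
    (u := fun j => completedGaussValuation p ⟨0, hn⟩ hπne hπ1 ((p : NNReal) ^ (2 * j)))
    (fun j => completedGaussValuation_le_one hπne hπ1 _) (v (π : K)) (hyperfilter ℕ)
    fun j => p ^ ⌈(1 - l : ℝ) * (j : ℝ)⌉₊, fun l => ?_, fun l m hlm => ?_⟩
  · exact growthIdeal_isPrime hπ1 (Eventually.of_forall fun j => (pow_pos hp.pos _).ne')
  have hl0 := sub_pos.mpr l.2.2
  have hl1 : (1 - l : ℝ) ≤ 1 := sub_le_self 1 l.2.1.le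
  have hm0 := (sub_pos.mpr m.2.2).le
  have hml : (1 - m : ℝ) < 1 - l := sub_lt_sub_left hlm 1
  refine SetLike.lt_iff_le_and_exists.mpr ⟨fun x hx N => ?_, ?_⟩
  · filter_upwards [hx N] with j hj
    refine hj.trans (pow_le_pow_right_of_le_one' hπ1.le (Nat.mul_le_mul_left _ ?_))
    exact Nat.pow_le_pow_right hp.pos (ceil_slope_mono hml.le j)
  obtain ⟨L, hL⟩ := exists_le_mul_ceil_slope hl0
  obtain ⟨F, hF⟩ := exists_completedGaussValuation_bounds (k := ⟨0, hn⟩) hπne hπ1 hp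
    (d := fun j => ⌈(1 - l : ℝ) * (j : ℝ)⌉₊) (fun i j hij => by dsimp only; gcongr)
    (ceil_slope_succ_le hl0.le hl1) (ceil_slope_le hl1) hL
  refine ⟨F, fun N => ?_, fun h => ?_⟩
  · filter_upwards [hU (eventually_mul_pow_ceil_slope_le hp.one_lt hm0 hml N)] with j hj
    exact (hF j).2.trans (pow_le_pow_right_of_le_one' hπ1.le hj)
  · obtain ⟨j, hj⟩ := (h 3).exists
    refine ((hF j).1.trans hj).not_gt (pow_lt_pow_right_of_lt_one₀ hπ0 hπ1 ?_)
    have := pow_pos hp.pos ⌈(1 - l : ℝ) * (j : ℝ)⌉₊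
    dsimp only
    omega
end

section
/- Let p be a prime and let F be a perfectoid field of characteristic p with ring of integers O_F. Then the ring of p-typical Witt vectors W(O_F) (Fontaine's period ring A_inf of the untilts of F) admits a family (𝔭_λ)_{λ∈(0,1)} of prime ideals, indexed by the real interval (0,1), with 𝔭_λ ⊊ 𝔭_μ whenever λ < μ; in particular W(O_F) has uncountable Krull dimension. -/
theorem Ideal.exists_mem_forall_dvd {R : Type*} [CommRing R] [IsBezout R] (I : Ideal R)
    (S : Finset R) (hS : ∀ a ∈ S, a ∈ I) : ∃ c ∈ I, ∀ a ∈ S, c ∣ a := by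
  obtain ⟨c, hc⟩ := IsBezout.isPrincipal_of_FG (Ideal.span (S : Set R)) ⟨S, rfl⟩
  refine ⟨c, Ideal.span_le.2 hS (hc ▸ Submodule.mem_span_singleton_self c), fun a ha ↦ ?_⟩
  have : a ∈ Ideal.span (S : Set R) := Ideal.subset_span ha
  rw [hc] at this
  exact Ideal.mem_span_singleton.1 this

namespace WittVector

section TeichmullerCoeff

variable {p : ℕ} [Fact p.Prime] {R : Type*} [CommRing R] [CharP R p] [PerfectRing R p]

/-- The `n`-th coefficient of the expansion `x = ∑ [xₙ] pⁿ` of a Witt vector over a perfect ring. -/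
noncomputable def teichmullerCoeff (n : ℕ) (x : WittVector p R) : R :=
  ((_root_.frobeniusEquiv R p).symm ^ n) (x.coeff n)

theorem frobeniusEquiv_symm_pow_apply_pow (n : ℕ) (c : R) :
    ((_root_.frobeniusEquiv R p).symm ^ n) (c ^ p ^ n) = c := by
  rw [← iterateFrobeniusEquiv_symm, ← iterateFrobeniusEquiv_def, RingEquiv.symm_apply_apply]

theorem teichmullerCoeff_zero (n : ℕ) : teichmullerCoeff n (0 : WittVector p R) = 0 := by
  simp [teichmullerCoeff]

theorem teichmullerCoeff_mk (c : ℕ → R) (n : ℕ) :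
    teichmullerCoeff n (WittVector.mk p fun i ↦ c i ^ p ^ i) = c n := by
  simp [teichmullerCoeff, frobeniusEquiv_symm_pow_apply_pow]

theorem teichmullerCoeff_teichmuller_mul_pow (n : ℕ) (c : R) :
    teichmullerCoeff n (teichmuller p c * (p : WittVector p R) ^ n) = c := by
  simp [teichmullerCoeff, frobeniusEquiv_symm_pow_apply_pow]

theorem teichmullerCoeff_teichmuller_mul_pow_of_ne (c : R) {m n : ℕ} (h : m ≠ n) :
    teichmullerCoeff m (teichmuller p c * (p : WittVector p R) ^ n) = 0 := by
  simp [teichmullerCoeff, teichmuller_mul_pow_coeff_of_ne c h]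

theorem teichmullerCoeff_eq_of_pow_dvd_sub {x y : WittVector p R} {n i : ℕ} (hi : i ≤ n)
    (h : (p : WittVector p R) ^ (n + 1) ∣ x - y) :
    teichmullerCoeff i x = teichmullerCoeff i y := by
  rw [← Ideal.mem_span_singleton, mem_span_p_pow_iff_le_coeff_eq_zero,
    ← le_coeff_eq_iff_le_sub_coeff_eq_zero] at h
  rw [teichmullerCoeff, teichmullerCoeff, h i (by lia)]

theorem pow_dvd_sub_sum_teichmullerCoeff (x : WittVector p R) (n : ℕ) :
    (p : WittVector p R) ^ (n + 1) ∣
      x - ∑ i ∈ Finset.Iic n, teichmuller p (teichmullerCoeff i x) * (p : WittVector p R) ^ i :=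
  dvd_sub_sum_teichmuller_iterateFrobeniusEquiv_coeff x n

theorem teichmullerCoeff_teichmuller_mul (c : R) (x : WittVector p R) (n : ℕ) :
    teichmullerCoeff n (teichmuller p c * x) = c * teichmullerCoeff n x := by
  set y : WittVector p R := WittVector.mk p fun i ↦ (c * teichmullerCoeff i x) ^ p ^ i
  have hyc (i : ℕ) : teichmullerCoeff i y = c * teichmullerCoeff i x :=
    teichmullerCoeff_mk _ i
  have h := dvd_sub ((pow_dvd_sub_sum_teichmullerCoeff x n).mul_left (teichmuller p c))
    (pow_dvd_sub_sum_teichmullerCoeff y n)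
  simp only [hyc, map_mul, mul_assoc, ← Finset.mul_sum, mul_sub, sub_sub_sub_cancel_right] at h
  rw [teichmullerCoeff_eq_of_pow_dvd_sub le_rfl h, hyc]

theorem mem_span_teichmuller_sup_pow_iff (c : R) (n : ℕ) (x : WittVector p R) :
    x ∈ Ideal.span {teichmuller p c, (p : WittVector p R) ^ (n + 1)} ↔
      ∀ i ≤ n, c ∣ teichmullerCoeff i x := by
  constructor
  · intro h i hi
    obtain ⟨a, b, rfl⟩ := Ideal.mem_span_pair.1 h
    rw [teichmullerCoeff_eq_of_pow_dvd_sub (y := teichmuller p c * a) hi ⟨b, by ring⟩,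
      teichmullerCoeff_teichmuller_mul]
    exact dvd_mul_right _ _
  · intro h
    rw [← sub_add_cancel x (∑ i ∈ Finset.Iic n,
      teichmuller p (teichmullerCoeff i x) * (p : WittVector p R) ^ i)]
    refine add_mem (Ideal.mem_of_dvd _ (pow_dvd_sub_sum_teichmullerCoeff x n)
      (Ideal.subset_span (by simp))) (sum_mem fun i hi ↦ ?_)
    refine Ideal.mem_of_dvd _ (Dvd.dvd.mul_right ?_ _)
      (Ideal.subset_span (Set.mem_insert (teichmuller p c) _))
    exact map_dvd _ (h i (Finset.mem_Iic.1 hi))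

/-- The Witt vectors over a perfect Bézout ring whose first `n + 1` coefficients in the
Teichmüller expansion lie in a given ideal. -/
def teichmullerIdeal [IsBezout R] (I : Ideal R) (n : ℕ) : Ideal (WittVector p R) where
  carrier := {x | ∀ i ≤ n, teichmullerCoeff i x ∈ I}
  zero_mem' i _ := by simp [teichmullerCoeff_zero]
  add_mem' {x y} hx hy := by
    classical
    obtain ⟨c, hcI, hc⟩ := I.exists_mem_forall_dvd
      ((Finset.Iic n).image (teichmullerCoeff · x) ∪ (Finset.Iic n).image (teichmullerCoeff · y))
      (fun a ha ↦ by
        simp only [Finset.mem_union, Finset.mem_image, Finset.mem_Iic] at ha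
        rcases ha with ⟨i, hi, rfl⟩ | ⟨i, hi, rfl⟩
        exacts [hx i hi, hy i hi])
    have h := (mem_span_teichmuller_sup_pow_iff c n (x + y)).1 (add_mem
      ((mem_span_teichmuller_sup_pow_iff c n x).2 fun i hi ↦ hc _
        (Finset.mem_union_left _ (Finset.mem_image_of_mem _ (Finset.mem_Iic.2 hi))))
      ((mem_span_teichmuller_sup_pow_iff c n y).2 fun i hi ↦ hc _
        (Finset.mem_union_right _ (Finset.mem_image_of_mem _ (Finset.mem_Iic.2 hi)))))
    exact fun i hi ↦ I.mem_of_dvd (h i hi) hcI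
  smul_mem' a x hx := by
    classical
    obtain ⟨c, hcI, hc⟩ := I.exists_mem_forall_dvd ((Finset.Iic n).image (teichmullerCoeff · x))
      (fun a ha ↦ by
        simp only [Finset.mem_image, Finset.mem_Iic] at ha
        obtain ⟨i, hi, rfl⟩ := ha
        exact hx i hi)
    have h := (mem_span_teichmuller_sup_pow_iff c n (a * x)).1 (Ideal.mul_mem_left _ a
      ((mem_span_teichmuller_sup_pow_iff c n x).2 fun i hi ↦ hc _
        (Finset.mem_image_of_mem _ (Finset.mem_Iic.2 hi))))
    exact fun i hi ↦ I.mem_of_dvd (h i hi) hcI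

theorem mem_teichmullerIdeal [IsBezout R] {I : Ideal R} {n : ℕ} {x : WittVector p R} :
    x ∈ teichmullerIdeal I n ↔ ∀ i ≤ n, teichmullerCoeff i x ∈ I :=
  Iff.rfl

theorem teichmuller_mul_pow_mem_teichmullerIdeal [IsBezout R] {I : Ideal R} {n i : ℕ} {c : R}
    (h : i ≤ n → c ∈ I) : teichmuller p c * (p : WittVector p R) ^ i ∈ teichmullerIdeal I n := by
  intro j hj
  rcases eq_or_ne j i with rfl | hne
  · rw [teichmullerCoeff_teichmuller_mul_pow]; exact h hj
  · rw [teichmullerCoeff_teichmuller_mul_pow_of_ne c hne]; exact zero_mem I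

/-- If all products `xᵢ yⱼ` with `i + j ≤ m + n` other than `xₘ yₙ` lie in `I`, and the
first `m + n + 1` coefficients of `x * y` do, then so does `xₘ yₙ`. -/
theorem teichmullerCoeff_mul_mem_of_mul_mem [IsBezout R] {I : Ideal R} {m n : ℕ}
    {x y : WittVector p R} (hxy : x * y ∈ teichmullerIdeal I (m + n))
    (h : ∀ i j, i + j ≤ m + n → (i, j) ≠ (m, n) →
      teichmullerCoeff i x * teichmullerCoeff j y ∈ I) :
    teichmullerCoeff m x * teichmullerCoeff n y ∈ I := by
  set J : Ideal (WittVector p R) := teichmullerIdeal I (m + n)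
  set N := m + n
  have hp : (p : WittVector p R) ^ (N + 1) ∈ J := by
    simpa using teichmuller_mul_pow_mem_teichmullerIdeal (I := I) (n := N) (i := N + 1)
      (c := (1 : R)) (p := p) (by lia)
  have hx := J.mem_of_dvd (pow_dvd_sub_sum_teichmullerCoeff x N) hp
  have hy := J.mem_of_dvd (pow_dvd_sub_sum_teichmullerCoeff y N) hp
  set X := ∑ i ∈ Finset.Iic N, teichmuller p (teichmullerCoeff i x) * (p : WittVector p R) ^ i
  set Y := ∑ i ∈ Finset.Iic N, teichmuller p (teichmullerCoeff i y) * (p : WittVector p R) ^ i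
  have hXY : X * Y ∈ J := by
    have := sub_mem hxy (add_mem (J.mul_mem_right y hx) (J.mul_mem_left X hy))
    convert this using 1
    ring
  rw [Finset.sum_mul_sum, ← Finset.sum_product',
    ← Finset.add_sum_erase _ _ (a := (m, n)) (by simp [N])] at hXY
  rw [Submodule.add_mem_iff_left] at hXY
  · have h1 : teichmuller p (teichmullerCoeff m x * teichmullerCoeff n y) *
        (p : WittVector p R) ^ N ∈ J := by
      convert hXY using 1
      simp only [N, map_mul]
      ring
    have := h1 N le_rfl
    rwa [teichmullerCoeff_teichmuller_mul_pow] at this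
  · refine sum_mem fun ij hij ↦ ?_
    have h1 := teichmuller_mul_pow_mem_teichmullerIdeal (p := p)
      (fun h' ↦ h ij.1 ij.2 h' (Finset.ne_of_mem_erase hij))
    convert h1 using 1
    rw [map_mul]
    ring

end TeichmullerCoeff

section Growth

/-- A nonnegative sequence tending to zero, positive somewhere, has a first maximal term. -/
theorem exists_first_isMax {f : ℕ → ℝ} (hf : Filter.Tendsto f Filter.atTop (nhds 0))
    {k : ℕ} (hk : 0 < f k) : ∃ n, (∀ i, f i ≤ f n) ∧ ∀ i < n, f i < f n := by
  classical
  have h : ∃ n, ∀ i, f i ≤ f n := by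
    obtain ⟨M, hM⟩ := Filter.eventually_atTop.1 (hf.eventually_lt_const hk)
    have hkM : k < M := by
      by_contra! h
      exact lt_irrefl _ (hM k h)
    obtain ⟨n, -, hn⟩ := (Finset.range M).exists_max_image f ⟨k, by simpa using hkM⟩
    refine ⟨n, fun i ↦ ?_⟩
    rcases lt_or_ge i M with hi | hi
    · exact hn i (by simpa using hi)
    · exact (hM i hi).le.trans (hn k (by simpa using hkM))
  refine ⟨Nat.find h, Nat.find_spec h, fun i hi ↦ ?_⟩
  obtain ⟨j, hj⟩ := not_forall.1 (Nat.find_min h hi)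
  exact (not_le.1 hj).trans_le (Nat.find_spec h j)

variable {p : ℕ} [Fact p.Prime] {F : Type*} [Field F] (v : Valuation F NNReal)

/-- The elements of valuation less than a given positive real number. -/
def integerBall (s : ℝ) (hs : 0 < s) : Ideal v.integer where
  carrier := {a | (v (a : F) : ℝ) < s}
  zero_mem' := by simpa using hs
  add_mem' {a b} ha hb := by
    have h : (v (a + b : F) : ℝ) ≤ max (v (a : F) : ℝ) (v (b : F)) := by
      exact_mod_cast v.map_add (a : F) b
    exact h.trans_lt (max_lt ha hb)
  smul_mem' c a ha := by
    have h : (v (c * a : F) : ℝ) ≤ v (a : F) := by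
      rw [map_mul]
      exact_mod_cast mul_le_of_le_one_left' c.2
    exact h.trans_lt ha

variable {v} in
theorem mem_integerBall {s : ℝ} {hs : 0 < s} {a : v.integer} :
    a ∈ integerBall v s hs ↔ (v (a : F) : ℝ) < s :=
  Iff.rfl

variable [CharP v.integer p] [PerfectRing v.integer p]

variable {v}

/-- The valuation of the `n`-th coefficient of the Teichmüller expansion of a Witt vector. -/
noncomputable def coeffNorm (n : ℕ) (x : WittVector p v.integer) : ℝ :=
  v ((teichmullerCoeff n x : v.integer) : F)

theorem coeffNorm_nonneg (n : ℕ) (x : WittVector p v.integer) : 0 ≤ coeffNorm n x :=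
  NNReal.coe_nonneg _

theorem coeffNorm_le_one (n : ℕ) (x : WittVector p v.integer) : coeffNorm n x ≤ 1 := by
  exact_mod_cast (teichmullerCoeff n x).2

theorem mem_teichmullerIdeal_integerBall {s : ℝ} {hs : 0 < s} {n : ℕ}
    {x : WittVector p v.integer} :
    x ∈ teichmullerIdeal (integerBall v s hs) n ↔ ∀ i ≤ n, coeffNorm i x < s :=
  Iff.rfl

theorem coe_valuation_mul_teichmullerCoeff (m n : ℕ) (x y : WittVector p v.integer) :
    (v ((teichmullerCoeff m x * teichmullerCoeff n y : v.integer) : F) : ℝ) =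
      coeffNorm m x * coeffNorm n y := by
  simp [coeffNorm]

/-- The Gauss norm of radius `r` of a product is at least the product of the Gauss norms. -/
theorem exists_mul_le_gauss {r : ℝ} (hr0 : 0 < r) (hr1 : r < 1) (x y : WittVector p v.integer)
    {m₀ n₀ : ℕ} {a b : ℝ} (ha0 : 0 < a) (hb0 : 0 < b)
    (ha : a ≤ coeffNorm m₀ x * r ^ m₀) (hb : b ≤ coeffNorm n₀ y * r ^ n₀) :
    ∃ k, a * b ≤ coeffNorm k (x * y) * r ^ k := by
  have hnonneg (z : WittVector p v.integer) (i : ℕ) : 0 ≤ coeffNorm i z * r ^ i :=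
    mul_nonneg (coeffNorm_nonneg i z) (by positivity)
  have key (z : WittVector p v.integer) {k : ℕ} {c : ℝ} (hc0 : 0 < c)
      (hc : c ≤ coeffNorm k z * r ^ k) :
      ∃ n, c ≤ coeffNorm n z * r ^ n ∧
        (∀ i, coeffNorm i z * r ^ i ≤ coeffNorm n z * r ^ n) ∧
        ∀ i < n, coeffNorm i z * r ^ i < coeffNorm n z * r ^ n := by
    obtain ⟨n, hn, hn'⟩ := exists_first_isMax
      (f := fun i ↦ coeffNorm i z * r ^ i) (k := k)
      (squeeze_zero (hnonneg z)
        (fun i ↦ mul_le_of_le_one_left (by positivity) (coeffNorm_le_one i z))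
        (tendsto_pow_atTop_nhds_zero_of_lt_one hr0.le hr1)) (hc0.trans_le hc)
    exact ⟨n, hc.trans (hn k), hn, hn'⟩
  obtain ⟨m, ham, hm, hm'⟩ := key x ha0 ha
  obtain ⟨n, hbn, hn, hn'⟩ := key y hb0 hb
  have hxm := ha0.trans_le ham
  have hyn := hb0.trans_le hbn
  have hs : 0 < coeffNorm m x * coeffNorm n y :=
    mul_pos (pos_of_mul_pos_left hxm (by positivity)) (pos_of_mul_pos_left hyn (by positivity))
  have hnot : x * y ∉ teichmullerIdeal (integerBall v _ hs) (m + n) := by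
    intro hmem
    have := teichmullerCoeff_mul_mem_of_mul_mem hmem fun i j hij hne ↦ by
      have hlt : coeffNorm i x * r ^ i * (coeffNorm j y * r ^ j) <
          coeffNorm m x * r ^ m * (coeffNorm n y * r ^ n) := by
        rcases lt_or_ge i m with hi | hi
        · exact mul_lt_mul_of_lt_of_le_of_nonneg_of_pos (hm' i hi) (hn j) (hnonneg x i) hyn
        · have hj : j < n := by grind
          exact mul_lt_mul_of_le_of_lt_of_nonneg_of_pos (hm i) (hn' j hj) (hnonneg y j) hxm
      have hpow : r ^ (m + n) ≤ r ^ (i + j) := pow_le_pow_of_le_one hr0.le hr1.le hij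
      rw [mem_integerBall, coe_valuation_mul_teichmullerCoeff]
      refine lt_of_mul_lt_mul_right (a := r ^ (m + n)) ?_ (by positivity)
      calc _ ≤ coeffNorm i x * coeffNorm j y * r ^ (i + j) :=
            mul_le_mul_of_nonneg_left hpow (mul_nonneg (coeffNorm_nonneg i x) (coeffNorm_nonneg j y))
        _ < _ := by
          convert hlt using 1 <;> ring
    rw [mem_integerBall, coe_valuation_mul_teichmullerCoeff] at this
    exact lt_irrefl _ this
  simp only [mem_teichmullerIdeal_integerBall, not_forall, not_lt] at hnot
  obtain ⟨k, hk, hle⟩ := hnot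
  refine ⟨k, ?_⟩
  calc a * b ≤ coeffNorm m x * r ^ m * (coeffNorm n y * r ^ n) := by
        gcongr
    _ = coeffNorm m x * coeffNorm n y * r ^ (m + n) := by ring
    _ ≤ coeffNorm k (x * y) * r ^ k :=
        mul_le_mul hle (pow_le_pow_of_le_one hr0.le hr1.le hk) (by positivity)
          (coeffNorm_nonneg k _)

/-- The Witt vectors `x` whose Gauss norm of radius `exp (-t)` is eventually less than
`exp (-C * g t)` along `U`, for every `C`. -/
def growthIdeal (v : Valuation F NNReal) [CharP v.integer p] [PerfectRing v.integer p]
    (U : Ultrafilter ℝ) (hU : ∀ᶠ t in U, (0 : ℝ) < t) (g : ℝ → ℝ) :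
    Ideal (WittVector p v.integer) where
  carrier := {x | ∀ C : ℝ, ∀ᶠ t in U, ∀ n : ℕ, coeffNorm n x < Real.exp (n * t - C * g t)}
  zero_mem' C := .of_forall fun t n ↦ by
    simpa [coeffNorm, teichmullerCoeff_zero] using Real.exp_pos _
  add_mem' {x y} hx hy C := by
    filter_upwards [hx C, hy C, hU] with t hxt hyt ht n
    have hmono {i : ℕ} (hi : i ≤ n) : Real.exp (i * t - C * g t) ≤ Real.exp (n * t - C * g t) := by
      gcongr
    have h := add_mem
      (mem_teichmullerIdeal_integerBall (hs := Real.exp_pos (n * t - C * g t)).2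
        fun i hi ↦ (hxt i).trans_le (hmono hi))
      (mem_teichmullerIdeal_integerBall.2 fun i hi ↦ (hyt i).trans_le (hmono hi))
    exact mem_teichmullerIdeal_integerBall.1 h n le_rfl
  smul_mem' a x hx C := by
    filter_upwards [hx C, hU] with t hxt ht n
    have h := Ideal.mul_mem_left _ a
      (mem_teichmullerIdeal_integerBall (hs := Real.exp_pos (n * t - C * g t)).2
        fun i hi ↦ (hxt i).trans_le (by gcongr))
    exact mem_teichmullerIdeal_integerBall.1 h n le_rfl

theorem mem_growthIdeal {U : Ultrafilter ℝ} {hU : ∀ᶠ t in U, (0 : ℝ) < t} {g : ℝ → ℝ}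
    {x : WittVector p v.integer} :
    x ∈ growthIdeal v U hU g ↔
      ∀ C : ℝ, ∀ᶠ t in U, ∀ n : ℕ, coeffNorm n x < Real.exp (n * t - C * g t) :=
  Iff.rfl

theorem growthIdeal_isPrime {U : Ultrafilter ℝ} (hU : ∀ᶠ t in U, (0 : ℝ) < t) {g : ℝ → ℝ}
    (hg : ∀ᶠ t in U, 0 < g t) : (growthIdeal (p := p) v U hU g).IsPrime := by
  refine ⟨(Ideal.ne_top_iff_one _).2 fun h ↦ ?_, fun {x y} hxy ↦ ?_⟩
  · obtain ⟨t, ht, hgt⟩ := ((mem_growthIdeal.1 h 1).and hg).exists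
    have := ht 0
    simp only [coeffNorm, teichmullerCoeff, one_coeff_zero, map_one, OneMemClass.coe_one,
      NNReal.coe_one, Real.one_lt_exp_iff] at this
    norm_num at this
    linarith
  · by_contra! hnot
    simp only [mem_growthIdeal, not_forall, ← Ultrafilter.eventually_not, not_lt] at hnot
    obtain ⟨⟨C, hC⟩, D, hD⟩ := hnot
    obtain ⟨t, ht, ⟨m, hm⟩, ⟨n, hn⟩, hlt⟩ :=
      (hU.and (hC.and (hD.and (mem_growthIdeal.1 hxy (C + D))))).exists
    have key {z : WittVector p v.integer} {E : ℝ} {k : ℕ}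
        (h : Real.exp (k * t - E * g t) ≤ coeffNorm k z) :
        Real.exp (-(E * g t)) ≤ coeffNorm k z * Real.exp (-t) ^ k := by
      refine le_of_eq_of_le ?_ (mul_le_mul_of_nonneg_right h (by positivity))
      rw [← Real.exp_nat_mul, ← Real.exp_add]
      ring_nf
    obtain ⟨k, hk⟩ := exists_mul_le_gauss (Real.exp_pos (-t)) (by simpa using ht) x y
      (Real.exp_pos _) (Real.exp_pos _) (key hm) (key hn)
    have := mul_lt_mul_of_pos_right (hlt k) (pow_pos (Real.exp_pos (-t)) k)
    refine lt_irrefl _ (this.trans_le (le_of_eq_of_le ?_ hk))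
    rw [← Real.exp_nat_mul, ← Real.exp_add, ← Real.exp_add]
    ring_nf

/-- In a perfect valuation ring, up to a bounded factor, every additive valuation
in the unit interval occurs. -/
theorem exists_exp_le_valuation_le_exp (h : ∃ x : F, 0 < v x ∧ v x < 1) :
    ∃ b : ℝ, 0 < b ∧ ∀ u : ℝ, 0 < u → u ≤ 1 → ∃ c : v.integer,
      Real.exp (-(p * b * u)) ≤ v (c : F) ∧ (v (c : F) : ℝ) ≤ Real.exp (-(b * u)) := by
  obtain ⟨x, hx0, hx1⟩ := h
  have hp1 : (1 : ℝ) < p := by exact_mod_cast (Fact.out : p.Prime).one_lt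
  have hb : 0 < -Real.log (v x) := by
    rw [neg_pos]
    exact Real.log_neg (by exact_mod_cast hx0) (by exact_mod_cast hx1)
  refine ⟨-Real.log (v x), hb, fun u hu0 hu1 ↦ ?_⟩
  obtain ⟨e, he, he'⟩ := exists_nat_pow_near ((one_le_inv₀ hu0).2 hu1) hp1
  have hpe : (0 : ℝ) < p ^ e := by positivity
  set c := (iterateFrobeniusEquiv v.integer p e).symm ⟨x, hx1.le⟩
  have hc : (v (c : F) : ℝ) ^ p ^ e = v x := by
    have h1 : c ^ p ^ e = ⟨x, hx1.le⟩ := by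
      rw [← iterateFrobeniusEquiv_def, RingEquiv.apply_symm_apply]
    have h2 : (c : F) ^ p ^ e = x := congrArg Subtype.val h1
    rw [← NNReal.coe_pow, ← map_pow, h2]
  have hc' : (v (c : F) : ℝ) = Real.exp (Real.log (v x) / p ^ e) := by
    refine (pow_left_inj₀ (by positivity) (by positivity)
      (pow_ne_zero e (Fact.out : p.Prime).ne_zero)).1 ?_
    rw [hc, ← Real.exp_nat_mul, Nat.cast_pow, mul_div_cancel₀ _ hpe.ne',
      Real.exp_log (by exact_mod_cast hx0)]
  refine ⟨c, ?_, ?_⟩ <;> rw [hc', Real.exp_le_exp]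
  · rw [le_div_iff₀ hpe]
    have : 1 ≤ p * u * p ^ e := by
      rw [pow_succ, inv_lt_iff_one_lt_mul₀ hu0] at he'
      linarith
    nlinarith
  · rw [div_le_iff₀ hpe]
    have : u * p ^ e ≤ 1 := by
      rwa [le_inv_comm₀ hpe hu0, ← one_div, le_div_iff₀ hpe] at he
    nlinarith

/-- There are Witt vectors whose Gauss norm of radius `exp (-t)` is `exp (-t ^ κ)`, up to a
constant in the exponent. -/
theorem exists_coeffNorm_growth (h : ∃ x : F, 0 < v x ∧ v x < 1) {κ : ℝ} (h0 : 0 < κ)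
    (h1 : κ < 1) : ∃ (x : WittVector p v.integer) (β C : ℝ), 0 < β ∧
      ∀ t : ℝ, 0 < t → t ≤ 1 →
        (∀ n : ℕ, coeffNorm n x ≤ Real.exp (n * t - β * t ^ κ)) ∧
        ∃ n : ℕ, Real.exp (n * t - C * t ^ κ) ≤ coeffNorm n x := by
  obtain ⟨b, hb, hbu⟩ := exists_exp_le_valuation_le_exp (p := p) h
  have h1' : 0 < 1 - κ := by linarith
  set a := κ / (1 - κ) with ha
  have ha0 : 0 < a := div_pos h0 h1'
  let u (n : ℕ) : ℝ := (max 1 (n : ℝ)) ^ (-a)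
  have hu0 (n : ℕ) : 0 < u n := Real.rpow_pos_of_pos (by positivity) _
  have hu1 (n : ℕ) : u n ≤ 1 :=
    Real.rpow_le_one_of_one_le_of_nonpos (le_max_left _ _) (by linarith)
  choose c hc hc' using fun n ↦ hbu (u n) (hu0 n) (hu1 n)
  refine ⟨WittVector.mk p fun i ↦ c i ^ p ^ i, min b 1, p * b + 2, lt_min hb one_pos,
    fun t ht0 ht1 ↦ ?_⟩
  simp only [coeffNorm, teichmullerCoeff_mk]
  set S := t ^ (κ - 1) with hS
  have hS0 : 0 < S := Real.rpow_pos_of_pos ht0 _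
  have hS1 : 1 ≤ S := Real.one_le_rpow_of_pos_of_le_one_of_nonpos ht0 ht1 (by linarith)
  have hSt : S * t = t ^ κ := by
    rw [hS, ← Real.rpow_add_one ht0.ne', sub_add_cancel]
  have hSa : S ^ (-a) = t ^ κ := by
    rw [hS, ← Real.rpow_mul ht0.le]
    congr 1
    rw [ha]
    field_simp
    ring
  have htκ : 0 < t ^ κ := Real.rpow_pos_of_pos ht0 _
  refine ⟨fun n ↦ ?_, ⌈S⌉₊, ?_⟩
  · rcases lt_or_ge (n : ℝ) S with hn | hn
    · refine (hc' n).trans (Real.exp_le_exp.2 ?_)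
      have hu : t ^ κ ≤ u n := by
        rw [← hSa]
        exact Real.rpow_le_rpow_of_nonpos (by positivity) (max_le hS1 hn.le) (by linarith)
      have : min b 1 * t ^ κ ≤ b * u n := mul_le_mul (min_le_left _ _) hu htκ.le hb.le
      have : 0 ≤ n * t := by positivity
      linarith
    · have h2 : min b 1 * t ^ κ ≤ 1 * t ^ κ := by
        gcongr
        exact min_le_right _ _
      have h3 : S * t ≤ n * t := by gcongr
      have h4 : (v (c n : F) : ℝ) ≤ 1 := by exact_mod_cast (c n).2
      exact h4.trans (Real.one_le_exp (by linarith))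
  · refine le_trans (Real.exp_le_exp.2 ?_) (hc _)
    have hn : (⌈S⌉₊ : ℝ) * t ≤ 2 * S * t := by
      have := (Nat.ceil_lt_add_one hS0.le).le
      gcongr
      linarith
    have hu : u ⌈S⌉₊ ≤ t ^ κ := by
      rw [← hSa]
      exact Real.rpow_le_rpow_of_nonpos hS0 ((Nat.le_ceil S).trans (le_max_right _ _)) (by linarith)
    have : p * b * u ⌈S⌉₊ ≤ p * b * t ^ κ := by gcongr
    linarith

theorem eventually_mul_rpow_lt_rpow {a b : ℝ} (hab : a < b) (C : ℝ) :
    ∀ᶠ t in nhdsWithin (0 : ℝ) (Set.Ioi 0), C * t ^ b < t ^ a := by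
  have h : Filter.Tendsto (fun t : ℝ ↦ C * t ^ (b - a)) (nhdsWithin 0 (Set.Ioi 0)) (nhds 0) := by
    have h1 := ((Real.continuousAt_rpow_const 0 (b - a) (Or.inr (by linarith))).tendsto.const_mul
      C).mono_left (nhdsWithin_le_nhds (s := Set.Ioi 0))
    rwa [Real.zero_rpow (by linarith), mul_zero] at h1
  filter_upwards [h.eventually_lt_const one_pos, self_mem_nhdsWithin] with t ht ht0
  have hpos := Real.rpow_pos_of_pos ht0 a
  calc C * t ^ b = C * t ^ (b - a) * t ^ a := by
        rw [mul_assoc, ← Real.rpow_add ht0, sub_add_cancel]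
    _ < 1 * t ^ a := by gcongr
    _ = t ^ a := one_mul _

theorem growthIdeal_rpow_lt {U : Ultrafilter ℝ} (hU : ∀ᶠ t in U, (0 : ℝ) < t)
    (hU0 : ↑U ≤ nhdsWithin (0 : ℝ) (Set.Ioi 0)) (h : ∃ x : F, 0 < v x ∧ v x < 1) {a b : ℝ}
    (ha : 0 < a) (hb : b < 1) (hab : a < b) :
    growthIdeal (p := p) v U hU (· ^ a) < growthIdeal v U hU (· ^ b) := by
  have hU1 : ∀ᶠ t in U, t ≤ (1 : ℝ) :=
    hU0 (nhdsWithin_le_nhds (Iic_mem_nhds one_pos))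
  refine SetLike.lt_iff_le_and_exists.2 ⟨fun x hx C ↦ ?_, ?_⟩
  · filter_upwards [mem_growthIdeal.1 hx 1, hU0 (eventually_mul_rpow_lt_rpow hab C)]
      with t ht hlt n
    refine (ht n).trans_le (Real.exp_le_exp.2 ?_)
    linarith
  · obtain ⟨κ, haκ, hκb⟩ := exists_between hab
    obtain ⟨x, β, C, hβ, hx⟩ :=
      exists_coeffNorm_growth (p := p) h (ha.trans haκ) (hκb.trans hb)
    refine ⟨x, fun D ↦ ?_, fun hxa ↦ ?_⟩
    · filter_upwards [hU, hU1, hU0 (eventually_mul_rpow_lt_rpow hκb (D / β))] with t ht0 ht1 hlt n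
      refine ((hx t ht0 ht1).1 n).trans_lt (Real.exp_lt_exp.2 ?_)
      rw [div_mul_eq_mul_div, div_lt_iff₀ hβ] at hlt
      linarith
    · obtain ⟨t, ht0, ht1, hlt, ht⟩ := (hU.and (hU1.and
        (Filter.Eventually.and (hU0 (eventually_mul_rpow_lt_rpow haκ C))
          (mem_growthIdeal.1 hxa 1)))).exists
      obtain ⟨n, hn⟩ := (hx t ht0 ht1).2
      have := Real.exp_lt_exp.1 (hn.trans_lt (ht n))
      linarith

end Growth

end WittVector


/-- for a perfectoid field `F` of characteristic `p`, Fontaine's period ring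
`A_inf = W(O_F)` (the `p`-typical Witt vectors of the ring of integers of `F`) has a
strictly increasing chain of prime ideals indexed by the real interval `(0,1)`; in
particular `W(O_F)` has uncountable Krull dimension. -/
theorem wittVectors_perfectoid_uncountable_chain_of_primes
    (p : ℕ) [Fact p.Prime] (F : Type) [Field F] [CharP F p]
    (v : Valuation F NNReal)
    (hnontriv : ∃ x : F, 0 < v x ∧ v x < 1)
    (hcomplete : ∀ f : ℕ → F,
      (∀ ε : NNReal, 0 < ε → ∃ N : ℕ, ∀ m ≥ N, ∀ n ≥ N, v (f m - f n) < ε) →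
      ∃ L : F, ∀ ε : NNReal, 0 < ε → ∃ N : ℕ, ∀ n ≥ N, v (f n - L) < ε)
    (hperf : Function.Bijective (fun x : F => x ^ p)) :
    ∃ P : Set.Ioo (0 : ℝ) 1 → Ideal (WittVector p v.integer),
      (∀ l, (P l).IsPrime) ∧
      ∀ l m : Set.Ioo (0 : ℝ) 1, (l : ℝ) < (m : ℝ) → P l < P m := by
  have : CharP v.integer p := inferInstance
  have : PerfectRing v.integer p := by
    refine PerfectRing.ofSurjective _ _ fun x ↦ ?_
    obtain ⟨y, hy⟩ := hperf.2 (x : F)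
    have hy1 : v y ≤ 1 := by
      rw [← pow_le_one_iff (Fact.out : p.Prime).ne_zero, ← map_pow]
      exact (congrArg v hy).trans_le x.2
    exact ⟨⟨y, hy1⟩, Subtype.ext hy⟩
  let U : Ultrafilter ℝ := Ultrafilter.of (nhdsWithin 0 (Set.Ioi 0))
  have hU0 : ↑U ≤ nhdsWithin (0 : ℝ) (Set.Ioi 0) := Ultrafilter.of_le _
  have hU : ∀ᶠ t in U, (0 : ℝ) < t := hU0 self_mem_nhdsWithin
  refine ⟨fun l ↦ WittVector.growthIdeal v U hU (· ^ (l : ℝ)), fun l ↦ ?_, fun l m hlm ↦ ?_⟩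
  · exact WittVector.growthIdeal_isPrime hU (hU.mono fun t ht ↦ Real.rpow_pos_of_pos ht _)
  · exact WittVector.growthIdeal_rpow_lt hU hU0 hnontriv l.2.1 m.2.2 hlm
end

section
/- Let p be a prime, κ a perfect field of characteristic p, and V = AddMonoidAlgebra κ M the monoid algebra κ[x^{1/p^∞}]. Let Γ be an additive subgroup of ℝ with 1 ∈ Γ, and let V[[t^{Γ≥0}]] = HahnSeries Γ≥0 V be the ring of Hahn (Mal'cev–Neumann) series over V with well-ordered support in Γ≥0 = {γ ∈ Γ : γ ≥ 0}. Then the t-adic completion of V[[t^{Γ≥0}]], i.e. its completion with respect to the ideal generated by the series t = HahnSeries.single 1 1, admits a family (𝔭_λ)_{λ∈(0,1)} of prime ideals, indexed by the real interval (0,1), with 𝔭_λ ⊊ 𝔭_μ whenever λ < μ; in particular it has uncountable Krull dimension. -/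
set_option synthInstance.maxHeartbeats 1000000
set_option maxHeartbeats 1000000

/-- The submonoid `Γ≥0` of nonnegative elements of an additive subgroup `Γ` of `ℝ`. -/
def nonnegPart (Γ : AddSubgroup ℝ) : AddSubmonoid ℝ where
  carrier := {x : ℝ | x ∈ Γ ∧ 0 ≤ x}
  zero_mem' := ⟨Γ.zero_mem, le_rfl⟩
  add_mem' := fun ha hb => ⟨Γ.add_mem ha.1 hb.1, add_nonneg ha.2 hb.2⟩

/-- The radical of the contraction of the principal ideal of elements of valuation at most `c`. -/
def Valuation.radicalIdeal {A Γ₀ : Type*} [CommRing A] [LinearOrderedCommGroupWithZero Γ₀]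
    (v : Valuation A Γ₀) (hv : ∀ a, v a ≤ 1) (c : Γ₀) : Ideal A where
  carrier := {a | ∃ n : ℕ, v a ^ (n + 1) ≤ c}
  zero_mem' := ⟨0, by simp⟩
  add_mem' := by
    rintro a b ⟨m, hm⟩ ⟨n, hn⟩
    rcases le_max_iff.1 (v.map_add a b) with h | h
    · exact ⟨m, (pow_le_pow_left₀ zero_le h _).trans hm⟩
    · exact ⟨n, (pow_le_pow_left₀ zero_le h _).trans hn⟩
  smul_mem' := by
    rintro a b ⟨n, hn⟩
    refine ⟨n, le_trans (pow_le_pow_left₀ zero_le ?_ _) hn⟩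
    rw [smul_eq_mul, map_mul]
    exact mul_le_of_le_one_left' (hv a)

theorem Valuation.mem_radicalIdeal {A Γ₀ : Type*} [CommRing A]
    [LinearOrderedCommGroupWithZero Γ₀] {v : Valuation A Γ₀} {hv : ∀ a, v a ≤ 1} {c : Γ₀} {a : A} :
    a ∈ v.radicalIdeal hv c ↔ ∃ n : ℕ, v a ^ (n + 1) ≤ c :=
  Iff.rfl

theorem Valuation.isPrime_radicalIdeal {A Γ₀ : Type*} [CommRing A]
    [LinearOrderedCommGroupWithZero Γ₀] (v : Valuation A Γ₀) (hv : ∀ a, v a ≤ 1) {c : Γ₀}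
    (hc : c < 1) : (v.radicalIdeal hv c).IsPrime := by
  refine ⟨fun h => ?_, ?_⟩
  · obtain ⟨n, hn⟩ := mem_radicalIdeal.1 ((Ideal.eq_top_iff_one _).1 h)
    rw [map_one, one_pow] at hn
    exact hn.not_gt hc
  · have key : ∀ a b : A, v a ≤ v b → a * b ∈ v.radicalIdeal hv c → a ∈ v.radicalIdeal hv c := by
      rintro a b hab ⟨n, hn⟩
      refine ⟨2 * n + 1, le_trans ?_ hn⟩
      rw [show 2 * n + 1 + 1 = 2 * (n + 1) by ring, pow_mul, sq, map_mul]
      exact pow_le_pow_left₀ zero_le (mul_le_mul_right hab _) _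
    intro a b hab
    rcases le_total (v a) (v b) with h | h
    · exact Or.inl (key a b h hab)
    · exact Or.inr (key b a h (mul_comm a b ▸ hab))

theorem Valuation.exists_strictMono_isPrime {A Γ₀ ι : Type*} [CommRing A]
    [LinearOrderedCommGroupWithZero Γ₀] [Preorder ι] (v : Valuation A Γ₀) (hv : ∀ a, v a ≤ 1)
    (f : ι → A) (hf0 : ∀ i, v (f i) ≠ 0) (hf1 : ∀ i, v (f i) < 1)
    (hf : ∀ i j, i < j → ∀ n : ℕ, v (f i) ≤ v (f j) ^ n) :
    ∃ P : ι → Ideal A, (∀ i, (P i).IsPrime) ∧ StrictMono P := by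
  refine ⟨fun i => v.radicalIdeal hv (v (f i)), fun i => v.isPrime_radicalIdeal hv (hf1 i),
    fun i j hij => lt_of_le_of_ne ?_ fun h => ?_⟩
  · rintro a ⟨n, hn⟩
    exact ⟨n, hn.trans ((hf i j hij 1).trans (pow_one _).le)⟩
  · have : f j ∈ v.radicalIdeal hv (v (f i)) := by
      rw [show v.radicalIdeal hv (v (f i)) = v.radicalIdeal hv (v (f j)) from h]
      exact ⟨0, by simp⟩
    obtain ⟨n, hn⟩ := this
    exact (hn.trans (hf i j hij (n + 2))).not_gt
      (pow_lt_pow_right_of_lt_one₀ (zero_lt_iff.2 (hf0 j)) (hf1 j) (Nat.lt_succ_self _))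

section Weight

variable {k M G : Type*} [Field k] [AddCommMonoid M] [AddCommMonoid G] [LinearOrder G]

/-- Every monomial of `a` has weight at least `c`, where the monomial `x ^ m t ^ g` has weight
`u m + w g`. -/
def WeightGE (u : M →+ ℝ) (w : G →+ ℝ) (c : ℝ) (a : HahnSeries G (AddMonoidAlgebra k M)) : Prop :=
  ∀ g m, (a.coeff g).coeff m ≠ 0 → c ≤ u m + w g

/-- The minimum weight of the monomials of `a` is attained and equal to `c`. -/
def HasWeight (u : M →+ ℝ) (w : G →+ ℝ) (c : ℝ) (a : HahnSeries G (AddMonoidAlgebra k M)) : Prop :=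
  WeightGE u w c a ∧ ∃ g m, (a.coeff g).coeff m ≠ 0 ∧ u m + w g = c

variable {u : M →+ ℝ} {w : G →+ ℝ} {c d : ℝ} {a b : HahnSeries G (AddMonoidAlgebra k M)}

theorem WeightGE.mono (h : c ≤ d) (ha : WeightGE u w d a) : WeightGE u w c a :=
  fun g m hgm => h.trans (ha g m hgm)

theorem WeightGE.add (ha : WeightGE u w c a) (hb : WeightGE u w c b) :
    WeightGE u w c (a + b) := by
  intro g m hgm
  by_cases h : (a.coeff g).coeff m = 0
  · refine hb g m fun h' => hgm ?_
    simp [h, h']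
  · exact ha g m h

theorem WeightGE.neg (ha : WeightGE u w c a) : WeightGE u w c (-a) := by
  intro g m hgm
  exact ha g m fun h => hgm (by simp [h])

theorem WeightGE.zero : WeightGE u w c (0 : HahnSeries G (AddMonoidAlgebra k M)) :=
  fun g m h => absurd (by simp) h

theorem exists_coeff_ne_zero_of_coeff_mul {x y : AddMonoidAlgebra k M} {m : M}
    (h : (x * y).coeff m ≠ 0) :
    ∃ i j, x.coeff i ≠ 0 ∧ y.coeff j ≠ 0 ∧ i + j = m := by
  classical
  have := AddMonoidAlgebra.support_coeff_mul_subset x y (Finsupp.mem_support_iff.2 h)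
  obtain ⟨i, hi, j, hj, hij⟩ := Finset.mem_add.1 this
  exact ⟨i, j, Finsupp.mem_support_iff.1 hi, Finsupp.mem_support_iff.1 hj, hij⟩

theorem HasWeight.le_of_weightGE (ha : HasWeight u w c a) (hd : WeightGE u w d a) : d ≤ c := by
  obtain ⟨-, g, m, h, rfl⟩ := ha
  exact hd g m h

theorem HasWeight.ne_zero (ha : HasWeight u w c a) : a ≠ 0 := by
  rintro rfl
  obtain ⟨-, g, m, h, -⟩ := ha
  exact h (by simp)

theorem HasWeight.exists_first (ha : HasWeight u w c a) :
    ∃ g m, (a.coeff g).coeff m ≠ 0 ∧ u m + w g = c ∧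
      ∀ g' m', (a.coeff g').coeff m' ≠ 0 → u m' + w g' = c → g ≤ g' := by
  have hwf : {g | ∃ m, (a.coeff g).coeff m ≠ 0 ∧ u m + w g = c}.IsWF :=
    a.isWF_support.mono fun g ⟨m, hm, _⟩ h => hm (by simp [h])
  obtain ⟨g₀, hg₀⟩ := ha.2
  obtain ⟨m, hm, hc⟩ := hwf.min_mem ⟨g₀, hg₀⟩
  exact ⟨_, m, hm, hc, fun g' m' h h' => hwf.min_le ⟨g₀, hg₀⟩ ⟨m', h, h'⟩⟩

theorem HasWeight.one : HasWeight u w 0 (1 : HahnSeries G (AddMonoidAlgebra k M)) := by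
  have h1 : ((1 : HahnSeries G (AddMonoidAlgebra k M)).coeff 0).coeff 0 ≠ 0 := by
    rw [HahnSeries.coeff_one, if_pos rfl, AddMonoidAlgebra.one_def, AddMonoidAlgebra.coeff_single]
    simp
  refine ⟨fun g m h => ?_, 0, 0, h1, by simp⟩
  by_cases hg : g = 0
  · subst hg
    rw [HahnSeries.coeff_one, if_pos rfl, AddMonoidAlgebra.one_def,
      AddMonoidAlgebra.coeff_single] at h
    by_cases hm : m = 0
    · simp [hm]
    · exact absurd (Finsupp.single_eq_of_ne hm) h
  · rw [HahnSeries.coeff_one, if_neg hg] at h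
    exact absurd (by simp) h

variable [IsOrderedCancelAddMonoid G]

theorem WeightGE.mul (ha : WeightGE u w c a) (hb : WeightGE u w d b) :
    WeightGE u w (c + d) (a * b) := by
  intro g m hgm
  rw [HahnSeries.coeff_mul, AddMonoidAlgebra.coeff_sum, Finsupp.finsetSum_apply] at hgm
  obtain ⟨⟨g₁, g₂⟩, hg, hne⟩ := Finset.exists_ne_zero_of_sum_ne_zero hgm
  obtain ⟨m₁, m₂, h₁, h₂, rfl⟩ := exists_coeff_ne_zero_of_coeff_mul hne
  obtain ⟨-, -, rfl⟩ := Finset.mem_antidiagonal.1 hg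
  have := ha _ _ h₁
  have := hb _ _ h₂
  simp only [map_add]
  linarith

theorem HasWeight.mul (hu : Function.Injective u) (ha : HasWeight u w c a)
    (hb : HasWeight u w d b) : HasWeight u w (c + d) (a * b) := by
  refine ⟨ha.1.mul hb.1, ?_⟩
  obtain ⟨g₁, m₁, hne₁, hc, hmin₁⟩ := ha.exists_first
  obtain ⟨g₂, m₂, hne₂, hd, hmin₂⟩ := hb.exists_first
  have huniq : ∀ {i j k l}, (a.coeff i).coeff k ≠ 0 → (b.coeff j).coeff l ≠ 0 →
      i + j = g₁ + g₂ → k + l = m₁ + m₂ → i = g₁ ∧ j = g₂ ∧ k = m₁ ∧ l = m₂ := by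
    intro i j k l hi hj hij hkl
    have h₁ := ha.1 i k hi
    have h₂ := hb.1 j l hj
    have e₁ := congrArg w hij
    have e₂ := congrArg u hkl
    simp only [map_add] at e₁ e₂
    have l₁ := hmin₁ i k hi (by linarith)
    have l₂ := hmin₂ j l hj (by linarith)
    obtain ⟨rfl, rfl⟩ : i = g₁ ∧ j = g₂ := by
      rcases l₁.lt_or_eq with h | rfl
      · exact absurd hij (add_lt_add_of_lt_of_le h l₂).ne'
      · exact ⟨rfl, add_left_cancel hij⟩
    exact ⟨rfl, rfl, hu (by linarith), hu (by linarith)⟩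
  refine ⟨g₁ + g₂, m₁ + m₂, ?_, by simp only [map_add]; linarith⟩
  rw [HahnSeries.coeff_mul, AddMonoidAlgebra.coeff_sum, Finsupp.finsetSum_apply,
    Finset.sum_eq_single (g₁, g₂)]
  · rw [AddMonoidAlgebra.coeff_mul_add_of_uniqueAdd]
    · exact mul_ne_zero hne₁ hne₂
    · intro i j hi hj hij
      exact (huniq (Finsupp.mem_support_iff.1 hi) (Finsupp.mem_support_iff.1 hj) rfl hij).2.2
  · rintro ⟨i, j⟩ hij hne
    by_contra h
    obtain ⟨k, l, hk, hl, hkl⟩ := exists_coeff_ne_zero_of_coeff_mul h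
    have := huniq hk hl (Finset.mem_antidiagonal.1 hij).2.2 hkl
    exact hne (Prod.ext this.1 this.2.1)
  · intro h
    by_contra h'
    refine h (Finset.mem_antidiagonal.2 ⟨fun h0 => hne₁ ?_, fun h0 => hne₂ ?_, rfl⟩) <;>
      simp [h0]

theorem HasWeight.pow (hu : Function.Injective u) (ha : HasWeight u w c a) (n : ℕ) :
    HasWeight u w (n * c) (a ^ n) := by
  induction n with
  | zero => simpa using HasWeight.one
  | succ n ih =>
    rw [pow_succ]
    convert ih.mul hu ha using 1
    push_cast
    ring

end Weight

section Domination

variable {k M G K σ : Type*} [Field k] [AddCommMonoid M] [AddCommMonoid G] [LinearOrder G]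
  [IsOrderedCancelAddMonoid G] [Field K] {u : M →+ ℝ}

/-- The fractions `a / b` such that eventually along `l` the monomials of `a` have weight at least
the minimum weight of `b`. -/
def boundedFractions (φ : HahnSeries G (AddMonoidAlgebra k M) →+* K) (hu : Function.Injective u)
    (w : σ → G →+ ℝ) (l : Filter σ) : Subring K where
  carrier := {z | ∃ a b, z * φ b = φ a ∧
    ∀ᶠ s in l, ∃ c, HasWeight u (w s) c b ∧ WeightGE u (w s) c a}
  zero_mem' := ⟨0, 1, by simp, .of_forall fun s => ⟨0, .one, .zero⟩⟩
  one_mem' := ⟨1, 1, by simp, .of_forall fun s => ⟨0, .one, HasWeight.one.1⟩⟩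
  neg_mem' := by
    rintro x ⟨a, b, hab, h⟩
    refine ⟨-a, b, by simp [hab], ?_⟩
    filter_upwards [h] with s ⟨c, hb, ha⟩
    exact ⟨c, hb, ha.neg⟩
  mul_mem' := by
    rintro x y ⟨a, b, hab, h⟩ ⟨a', b', hab', h'⟩
    refine ⟨a * a', b * b', by rw [map_mul, map_mul, ← hab, ← hab']; ring, ?_⟩
    filter_upwards [h, h'] with s ⟨c, hb, ha⟩ ⟨c', hb', ha'⟩
    exact ⟨c + c', hb.mul hu hb', ha.mul ha'⟩
  add_mem' := by
    rintro x y ⟨a, b, hab, h⟩ ⟨a', b', hab', h'⟩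
    refine ⟨a * b' + b * a', b * b', by
      rw [map_add, map_mul, map_mul, map_mul, ← hab, ← hab']; ring, ?_⟩
    filter_upwards [h, h'] with s ⟨c, hb, ha⟩ ⟨c', hb', ha'⟩
    exact ⟨c + c', hb.mul hu hb', (ha.mul hb'.1).add (hb.1.mul ha')⟩

/-- The ideal of those bounded fractions for which the inequality of weights is strict. -/
def smallFractions (φ : HahnSeries G (AddMonoidAlgebra k M) →+* K) (hu : Function.Injective u)
    (w : σ → G →+ ℝ) (l : Filter σ) : Ideal (boundedFractions φ hu w l) where
  carrier := {z | ∃ a b, (z : K) * φ b = φ a ∧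
    ∀ᶠ s in l, ∃ c d, c < d ∧ HasWeight u (w s) c b ∧ WeightGE u (w s) d a}
  zero_mem' := ⟨0, 1, by simp, .of_forall fun s => ⟨0, 1, one_pos, .one, .zero⟩⟩
  smul_mem' := by
    rintro ⟨x, a, b, hab, h⟩ ⟨y, _⟩ ⟨a', b', hab', h'⟩
    refine ⟨a * a', b * b', ?_, ?_⟩
    · simp only [smul_eq_mul, Subring.coe_mul, map_mul] at hab' ⊢
      rw [← hab, ← hab']
      ring
    · filter_upwards [h, h'] with s ⟨c, hb, ha⟩ ⟨c', d', hcd, hb', ha'⟩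
      exact ⟨c + c', c + d', by linarith, hb.mul hu hb', ha.mul ha'⟩
  add_mem' := by
    rintro ⟨x, _⟩ ⟨y, _⟩ ⟨a, b, hab, h⟩ ⟨a', b', hab', h'⟩
    refine ⟨a * b' + b * a', b * b', ?_, ?_⟩
    · simp only [Subring.coe_add, map_add, map_mul] at hab hab' ⊢
      rw [← hab, ← hab']
      ring
    · filter_upwards [h, h'] with s ⟨c, d, hcd, hb, ha⟩ ⟨c', d', hcd', hb', ha'⟩
      exact ⟨c + c', min (d + c') (c + d'), lt_min (by linarith) (by linarith), hb.mul hu hb',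
        ((ha.mul hb'.1).mono (min_le_left _ _)).add ((hb.1.mul ha').mono (min_le_right _ _))⟩

theorem smallFractions_ne_top {φ : HahnSeries G (AddMonoidAlgebra k M) →+* K}
    (hφ : Function.Injective φ) (hu : Function.Injective u) (w : σ → G →+ ℝ) (l : Filter σ)
    [l.NeBot] : smallFractions φ hu w l ≠ ⊤ := by
  intro h
  obtain ⟨a, b, hab, hev⟩ := (Ideal.eq_top_iff_one _).1 h
  obtain ⟨s, c, d, hcd, hb, ha⟩ := hev.exists
  rw [Subring.coe_one, one_mul] at hab
  rw [← hφ hab] at ha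
  exact (hb.le_of_weightGE ha).not_gt hcd

/-- There is a valuation on the series ring that refines the eventual comparison of weights. -/
theorem exists_valuation_of_weight [IsDomain (HahnSeries G (AddMonoidAlgebra k M))]
    (hu : Function.Injective u) (w : σ → G →+ ℝ) (l : Filter σ) [l.NeBot] :
    ∃ (V : ValuationSubring (FractionRing (HahnSeries G (AddMonoidAlgebra k M))))
      (v : Valuation (HahnSeries G (AddMonoidAlgebra k M)) V.ValueGroup),
      (∀ a, a ≠ 0 → v a ≠ 0) ∧
      (∀ a b, (∀ᶠ s in l, ∃ c, HasWeight u (w s) c b ∧ WeightGE u (w s) c a) → v a ≤ v b) ∧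
      ∀ a b, (∀ᶠ s in l, ∃ c d, c < d ∧ HasWeight u (w s) c b ∧ WeightGE u (w s) d a) →
        v a < v b := by
  set A := HahnSeries G (AddMonoidAlgebra k M)
  set φ : A →+* FractionRing A := algebraMap A (FractionRing A)
  have hφ : Function.Injective φ := IsFractionRing.injective A _
  obtain ⟨V, hBV, hJV⟩ := Ideal.image_subset_nonunits_valuationSubring
    (smallFractions φ hu w l) (smallFractions_ne_top hφ hu w l)
  have hne : ∀ b, b ≠ 0 → V.valuation (φ b) ≠ 0 := fun b hb =>
    (Valuation.ne_zero_iff _).2 ((map_ne_zero_iff φ hφ).2 hb)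
  refine ⟨V, V.valuation.comap φ, hne, fun a b h => ?_, fun a b h => ?_⟩
  · have hb : b ≠ 0 := by
      obtain ⟨s, c, hc, -⟩ := h.exists
      exact hc.ne_zero
    have hφb : φ b ≠ 0 := (map_ne_zero_iff φ hφ).2 hb
    have hmem : φ a / φ b ∈ V := hBV ⟨a, b, div_mul_cancel₀ _ hφb, h⟩
    rw [← V.valuation_le_one_iff, map_div₀] at hmem
    exact (div_le_one₀ (zero_lt_iff.2 (hne b hb))).1 hmem
  · have hb : b ≠ 0 := by
      obtain ⟨s, c, d, -, hc, -⟩ := h.exists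
      exact hc.ne_zero
    have hφb : φ b ≠ 0 := (map_ne_zero_iff φ hφ).2 hb
    have hB : φ a / φ b ∈ boundedFractions φ hu w l :=
      ⟨a, b, div_mul_cancel₀ _ hφb, h.mono fun s ⟨c, d, hcd, h₁, h₂⟩ => ⟨c, h₁, h₂.mono hcd.le⟩⟩
    have hmem : φ a / φ b ∈ V.nonunits :=
      hJV ⟨⟨_, hB⟩, ⟨a, b, div_mul_cancel₀ _ hφb, h⟩, rfl⟩
    rw [V.mem_nonunits_iff, map_div₀] at hmem
    exact (div_lt_one₀ (zero_lt_iff.2 (hne b hb))).1 hmem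

end Domination

section Completeness

variable {Γ : AddSubgroup ℝ} {R : Type*} [CommRing R]

theorem HahnSeries.mem_span_single_one_pow_iff (h1 : (1 : ℝ) ∈ Γ) (n : ℕ)
    (x : HahnSeries (nonnegPart Γ) R) :
    x ∈ Ideal.span {HahnSeries.single (⟨1, h1, zero_le_one⟩ : nonnegPart Γ) (1 : R)} ^ n ↔
      ∀ g : nonnegPart Γ, (g : ℝ) < n → x.coeff g = 0 := by
  set e : nonnegPart Γ := ⟨1, h1, zero_le_one⟩
  have hne : ((n • e : nonnegPart Γ) : ℝ) = n := by simp [e]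
  rw [Ideal.span_singleton_pow, HahnSeries.single_pow, one_pow, Ideal.mem_span_singleton']
  constructor
  · rintro ⟨y, rfl⟩ g hg
    rw [mul_comm, HahnSeries.coeff_mul]
    refine Finset.sum_eq_zero fun ⟨i, j⟩ hij => ?_
    obtain ⟨hi, -, hij⟩ := Finset.mem_antidiagonal.1 hij
    have hi := HahnSeries.support_single_subset hi
    simp only [Set.mem_singleton_iff] at hi hij
    have : (g : ℝ) = n + j := by rw [← hij, hi, AddSubmonoid.coe_add, hne]
    linarith [j.2.2]
  · intro h
    refine ⟨⟨fun g => x.coeff (g + n • e), fun f => ?_⟩, ?_⟩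
    · obtain ⟨i, j, hij, hle⟩ := x.isPWO_support (fun i =>
        ⟨(f i : nonnegPart Γ) + n • e, HahnSeries.mem_support _ _ |>.2 (f i).2⟩)
      exact ⟨i, j, hij, le_of_add_le_add_right hle⟩
    · ext g
      by_cases hg : (g : ℝ) < n
      · rw [h g hg, mul_comm, HahnSeries.coeff_mul]
        refine Finset.sum_eq_zero fun ⟨i, j⟩ hij => ?_
        obtain ⟨hi, -, hij⟩ := Finset.mem_antidiagonal.1 hij
        have hi := HahnSeries.support_single_subset hi
        simp only [Set.mem_singleton_iff] at hi hij
        have : (g : ℝ) = n + j := by rw [← hij, hi, AddSubmonoid.coe_add, hne]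
        linarith [j.2.2]
      · obtain ⟨d, rfl⟩ : ∃ d, g = d + n • e :=
          ⟨⟨g - n, Γ.sub_mem g.2.1 (by simpa using Γ.nsmul_mem h1 n), by linarith⟩,
            Subtype.ext (by rw [AddSubmonoid.coe_add, hne]; simp)⟩
        rw [HahnSeries.coeff_mul_single_add, mul_one]

theorem HahnSeries.isAdicComplete_span_single_one (h1 : (1 : ℝ) ∈ Γ) :
    IsAdicComplete
      (Ideal.span {HahnSeries.single (⟨1, h1, zero_le_one⟩ : nonnegPart Γ) (1 : R)})
      (HahnSeries (nonnegPart Γ) R) where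
  haus' x hx := by
    ext g
    obtain ⟨n, hn⟩ := exists_nat_gt (g : ℝ)
    have := SModEq.zero.1 (hx n)
    rw [smul_eq_mul, Ideal.mul_top, mem_span_single_one_pow_iff h1] at this
    exact this g hn
  prec' f hf := by
    have hcoeff : ∀ {m n : ℕ} {g : nonnegPart Γ}, (g : ℝ) < m → m ≤ n →
        (f m).coeff g = (f n).coeff g := by
      intro m n g hg hmn
      have := SModEq.sub_mem.1 (hf hmn)
      rw [smul_eq_mul, Ideal.mul_top, mem_span_single_one_pow_iff h1] at this
      exact sub_eq_zero.1 (this g hg)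
    have hlim : ∀ (n : ℕ) (g : nonnegPart Γ), (g : ℝ) < n →
        (f (⌊(g : ℝ)⌋₊ + 1)).coeff g = (f n).coeff g := by
      intro n g hg
      exact hcoeff (by exact_mod_cast Nat.lt_floor_add_one (g : ℝ)) ((Nat.floor_lt g.2.2).2 hg)
    refine ⟨⟨fun g => (f (⌊(g : ℝ)⌋₊ + 1)).coeff g, fun h => ?_⟩, fun n => ?_⟩
    · by_cases hle : ∃ j, 0 < j ∧ (h 0 : nonnegPart Γ) ≤ h j
      · obtain ⟨j, hj, hle⟩ := hle
        exact ⟨0, j, hj, hle⟩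
      · push Not at hle
        obtain ⟨N, hN⟩ := exists_nat_gt ((h 0 : nonnegPart Γ) : ℝ)
        have hlt : ∀ j, ((h j : nonnegPart Γ) : ℝ) < N := by
          intro j
          rcases j.eq_zero_or_pos with rfl | hj
          · exact hN
          · exact lt_trans (hle j hj) hN
        exact (f N).isPWO_support fun j => ⟨h j, by
          rw [HahnSeries.mem_support, ← hlim N _ (hlt j)]
          exact (h j).2⟩
    · rw [SModEq.sub_mem, smul_eq_mul, Ideal.mul_top, mem_span_single_one_pow_iff h1]
      intro g hg
      rw [HahnSeries.coeff_sub, sub_eq_zero]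
      exact (hlim n g hg).symm

end Completeness

section SlowSeries

theorem pPowRat.exists_near {p : ℕ} (hp : 1 < p) {x : ℝ} (hx0 : 0 < x) (hx1 : x ≤ 1) :
    ∃ q : pPowRat p, x ≤ ((q : ℚ) : ℝ) ∧ ((q : ℚ) : ℝ) ≤ p * x := by
  have hp1 : (1 : ℝ) < p := by exact_mod_cast hp
  have hp0 : (0 : ℝ) < p := zero_lt_one.trans hp1
  have hpq : (p : ℚ) ≠ 0 := by exact_mod_cast (zero_lt_one.trans hp).ne'
  obtain ⟨n, hn1, hn2⟩ := exists_nat_pow_near_of_lt_one hx0 hx1 (inv_pos.2 hp0)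
    (inv_lt_one_of_one_lt₀ hp1)
  refine ⟨⟨(p : ℚ)⁻¹ ^ n, by positivity, n, 1, ?_⟩, ?_, ?_⟩
  · rw [← mul_pow, mul_inv_cancel₀ hpq, one_pow, Int.cast_one]
  · push_cast
    exact hn2
  · push_cast
    rw [pow_succ, ← div_eq_mul_inv, div_lt_iff₀ hp0] at hn1
    rw [mul_comm]
    exact hn1.le

/-- The minimum over `y = 1, 2, …` of `y ^ (-b / (1 - b)) + s * y` has order of magnitude
`s ^ b`. -/
theorem exists_min_rpow_add_mul {q : ℕ → ℝ} {b C s : ℝ} (hb0 : 0 < b) (hb1 : b < 1) (hC : 0 ≤ C)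
    (hq1 : ∀ i : ℕ, ((i : ℝ) + 1) ^ (-(b / (1 - b))) ≤ q i)
    (hq2 : ∀ i : ℕ, q i ≤ C * ((i : ℝ) + 1) ^ (-(b / (1 - b)))) (hs0 : 0 < s) (hs1 : s ≤ 1) :
    ∃ i : ℕ, (∀ j : ℕ, q i + s * ((i : ℝ) + 1) ≤ q j + s * ((j : ℝ) + 1)) ∧
      s ^ b ≤ q i + s * ((i : ℝ) + 1) ∧ q i + s * ((i : ℝ) + 1) ≤ (C + 2) * s ^ b := by
  have hb : 0 < 1 - b := sub_pos.2 hb1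
  have hy : ∀ i : ℕ, (0 : ℝ) < (i : ℝ) + 1 := fun i => by positivity
  have hq0 : ∀ i, 0 ≤ q i := fun i => (Real.rpow_nonneg (hy i).le _).trans (hq1 i)
  have hpow : (s ^ (-(1 - b))) ^ (-(b / (1 - b))) = s ^ b := by
    rw [← Real.rpow_mul hs0.le]
    congr 1
    field_simp
  have hmul : s * s ^ (-(1 - b)) = s ^ b := by
    nth_rewrite 1 [← Real.rpow_one s]
    rw [← Real.rpow_add hs0]
    congr 1
    ring
  have hneg : -(b / (1 - b)) ≤ 0 := neg_nonpos.2 (div_pos hb0 hb).le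
  have htend : Filter.Tendsto (fun i : ℕ => q i + s * ((i : ℝ) + 1)) Filter.cofinite
      Filter.atTop := by
    rw [Nat.cofinite_eq_atTop]
    refine Filter.tendsto_atTop_mono (fun i => le_add_of_nonneg_left (hq0 i))
      (Filter.Tendsto.const_mul_atTop hs0 ?_)
    exact Filter.tendsto_atTop_add_const_right _ _ tendsto_natCast_atTop_atTop
  obtain ⟨i, hi⟩ := htend.exists_forall_le
  refine ⟨i, hi, ?_, ?_⟩
  · rcases le_total ((i : ℝ) + 1) (s ^ (-(1 - b))) with h | h
    · have := Real.rpow_le_rpow_of_nonpos (hy i) h hneg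
      rw [hpow] at this
      exact (this.trans (hq1 i)).trans (le_add_of_nonneg_right (mul_pos hs0 (hy i)).le)
    · have := mul_le_mul_of_nonneg_left h hs0.le
      rw [hmul] at this
      exact this.trans (le_add_of_nonneg_left (hq0 i))
  · set y := s ^ (-(1 - b))
    have hy0 : 0 < y := Real.rpow_pos_of_pos hs0 _
    refine (hi ⌊y⌋₊).trans ?_
    have h1 : q ⌊y⌋₊ ≤ C * s ^ b := (hq2 _).trans (mul_le_mul_of_nonneg_left
      (hpow ▸ Real.rpow_le_rpow_of_nonpos hy0 (Nat.lt_floor_add_one y).le hneg) hC)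
    have h2 : s * (⌊y⌋₊ : ℝ) ≤ s ^ b :=
      hmul ▸ mul_le_mul_of_nonneg_left (Nat.floor_le hy0.le) hs0.le
    have h3 : s ≤ s ^ b := by
      simpa using Real.rpow_le_rpow_of_exponent_ge hs0 hs1 hb1.le
    linarith

variable (p : ℕ) (Γ : AddSubgroup ℝ)

/-- The inclusion of the exponents of `x` into `ℝ`. -/
noncomputable def pPowRat.toReal : pPowRat p →+ ℝ :=
  (Rat.castHom ℝ).toAddMonoidHom.comp (pPowRat p).subtype

/-- The inclusion of the exponents of `t` into `ℝ`, scaled by `s`. -/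
noncomputable def nonnegPart.scale (s : ℝ) : nonnegPart Γ →+ ℝ :=
  (AddMonoidHom.mulLeft s).comp (nonnegPart Γ).subtype

variable {p Γ}

theorem pPowRat.toReal_injective : Function.Injective (pPowRat.toReal p) :=
  Rat.cast_injective.comp Subtype.val_injective

theorem pPowRat.toReal_nonneg (q : pPowRat p) : 0 ≤ pPowRat.toReal p q :=
  Rat.cast_nonneg.2 q.2.1

theorem nonnegPart.scale_nonneg {s : ℝ} (hs : 0 ≤ s) (g : nonnegPart Γ) :
    0 ≤ nonnegPart.scale Γ s g :=
  mul_nonneg hs g.2.2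

/-- The positive integers as exponents of `t`. -/
noncomputable def nonnegPart.succEmb (h1 : (1 : ℝ) ∈ Γ) : ℕ ↪o nonnegPart Γ :=
  OrderEmbedding.ofStrictMono
    (fun i => ⟨(i : ℝ) + 1, Γ.add_mem (by simpa using Γ.nsmul_mem h1 i) h1, by positivity⟩)
    fun i j hij => Subtype.mk_lt_mk.2 (by simpa using hij)

/-- For each `b ∈ (0,1)` there is a series of weight comparable to `s ^ b` for all small `s`. -/
theorem exists_hasWeight_rpow {κ : Type*} [Field κ] (hp : 1 < p) (h1 : (1 : ℝ) ∈ Γ) {b : ℝ}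
    (hb0 : 0 < b) (hb1 : b < 1) :
    ∃ f : HahnSeries (nonnegPart Γ) (AddMonoidAlgebra κ (pPowRat p)),
      ∀ s : ℝ, 0 < s → s ≤ 1 → ∃ c, s ^ b ≤ c ∧ c ≤ (p + 2) * s ^ b ∧
        HasWeight (pPowRat.toReal p) (nonnegPart.scale Γ s) c f := by
  have hneg : -(b / (1 - b)) ≤ 0 := neg_nonpos.2 (div_pos hb0 (sub_pos.2 hb1)).le
  choose q hq1 hq2 using fun i : ℕ => pPowRat.exists_near hp
    (Real.rpow_pos_of_pos (by positivity : (0 : ℝ) < (i : ℝ) + 1) (-(b / (1 - b))))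
    (Real.rpow_le_one_of_one_le_of_nonpos (by simp) hneg)
  let F : HahnSeries ℕ (AddMonoidAlgebra κ (pPowRat p)) :=
    ⟨fun i => AddMonoidAlgebra.single (q i) 1, Set.IsWF.isPWO (Set.IsWF.of_wellFoundedLT _)⟩
  have hF : ∀ i, ((HahnSeries.embDomain (nonnegPart.succEmb h1) F).coeff
      (nonnegPart.succEmb h1 i)) = AddMonoidAlgebra.single (q i) 1 := fun i => by
    rw [HahnSeries.embDomain_coeff]
  refine ⟨HahnSeries.embDomain (nonnegPart.succEmb h1) F, fun s hs0 hs1 => ?_⟩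
  obtain ⟨i, hi, hi1, hi2⟩ := exists_min_rpow_add_mul hb0 hb1 p.cast_nonneg hq1 hq2 hs0 hs1
  refine ⟨_, hi1, hi2, fun g m hgm => ?_, nonnegPart.succEmb h1 i, q i, ?_, rfl⟩
  · by_cases hg : g ∈ Set.range (nonnegPart.succEmb h1)
    · obtain ⟨j, rfl⟩ := hg
      rw [hF, AddMonoidAlgebra.coeff_single, Finsupp.single_apply_ne_zero] at hgm
      rw [hgm.1]
      exact hi j
    · rw [HahnSeries.embDomain_of_notMem_range hg] at hgm
      exact absurd rfl hgm
  · rw [hF, AddMonoidAlgebra.coeff_single, Finsupp.single_eq_same]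
    exact one_ne_zero

theorem eventually_mul_rpow_le {b d : ℝ} (hbd : b < d) (C : ℝ) :
    ∀ᶠ s in nhdsWithin (0 : ℝ) (Set.Ioi 0), C * s ^ d ≤ s ^ b := by
  have h0 : Filter.Tendsto (fun s : ℝ => C * s ^ (d - b)) (nhdsWithin 0 (Set.Ioi 0)) (nhds 0) := by
    have := ((Real.continuousAt_rpow_const 0 (d - b) (Or.inr (sub_pos.2 hbd).le)).tendsto.const_mul
      C).mono_left (nhdsWithin_le_nhds (s := Set.Ioi 0))
    rwa [Real.zero_rpow (sub_pos.2 hbd).ne', mul_zero] at this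
  filter_upwards [h0.eventually (ge_mem_nhds zero_lt_one), self_mem_nhdsWithin] with s hs hs0
  have := mul_le_mul_of_nonneg_right hs (Real.rpow_nonneg (le_of_lt hs0) b)
  rwa [mul_assoc, ← Real.rpow_add hs0, sub_add_cancel, one_mul] at this

theorem exists_strictMono_isPrime_hahnSeries {κ : Type*} [Field κ] (hp : 1 < p)
    (h1 : (1 : ℝ) ∈ Γ) :
    ∃ P : Set.Ioo (0 : ℝ) 1 → Ideal (HahnSeries (nonnegPart Γ) (AddMonoidAlgebra κ (pPowRat p))),
      (∀ l, (P l).IsPrime) ∧ StrictMono P := by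
  choose f hf using fun b : Set.Ioo (0 : ℝ) 1 =>
    exists_hasWeight_rpow (κ := κ) (Γ := Γ) hp h1 b.2.1 b.2.2
  have hs : ∀ᶠ s in nhdsWithin (0 : ℝ) (Set.Ioi 0), 0 < s ∧ s ≤ 1 := by
    filter_upwards [self_mem_nhdsWithin, nhdsWithin_le_nhds (ge_mem_nhds zero_lt_one)] with s h0 h1
    exact ⟨h0, h1⟩
  obtain ⟨V, v, hv0, hvle, hvlt⟩ := exists_valuation_of_weight (k := κ)
    (pPowRat.toReal_injective (p := p)) (nonnegPart.scale Γ) (nhdsWithin (0 : ℝ) (Set.Ioi 0))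
  refine v.exists_strictMono_isPrime (fun a => ?_) f (fun i => hv0 _ ?_) (fun i => ?_)
    fun i j hij n => ?_
  · rw [← map_one v]
    refine hvle _ _ (hs.mono fun s hs => ⟨0, .one, fun g m _ => ?_⟩)
    exact add_nonneg (pPowRat.toReal_nonneg m) (nonnegPart.scale_nonneg hs.1.le g)
  · obtain ⟨c, -, -, hc⟩ := hf i 1 one_pos le_rfl
    exact hc.ne_zero
  · rw [← map_one v]
    refine hvlt _ _ (hs.mono fun s hs => ?_)
    obtain ⟨c, hc, -, hw⟩ := hf i s hs.1 hs.2
    exact ⟨0, c, (Real.rpow_pos_of_pos hs.1 _).trans_le hc, .one, hw.1⟩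
  · rw [← map_pow]
    refine hvle _ _ ?_
    filter_upwards [hs, eventually_mul_rpow_le hij (n * (p + 2))] with s hs hle
    obtain ⟨c, hc, -, hw⟩ := hf i s hs.1 hs.2
    obtain ⟨d, -, hd, hw'⟩ := hf j s hs.1 hs.2
    refine ⟨n * d, hw'.pow pPowRat.toReal_injective n, hw.1.mono ?_⟩
    refine (mul_le_mul_of_nonneg_left hd n.cast_nonneg).trans (le_trans (le_of_eq ?_) (hle.trans hc))
    ring

end SlowSeries

/-- for `κ` a perfect field of characteristic `p`,
`V = κ[x^{1/p^∞}]` and `Γ ≤ ℝ` an additive subgroup containing `1`, the `t`-adic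
completion of the Mal'cev–Neumann series ring `V[[t^{Γ≥0}]]` has a strictly increasing
chain of prime ideals indexed by the real interval `(0,1)`; in particular it has
uncountable Krull dimension. -/
theorem malcevNeumann_tAdicCompletion_uncountable_chain_of_primes
    (p : ℕ) (hp : p.Prime) (κ : Type) [Field κ] [CharP κ p]
    (hperf : Function.Bijective (fun x : κ => x ^ p))
    (Γ : AddSubgroup ℝ) (h1 : (1 : ℝ) ∈ Γ) :
    ∃ P : Set.Ioo (0 : ℝ) 1 →
        Ideal (AdicCompletion
          (Ideal.span
            {HahnSeries.single (⟨1, h1, zero_le_one⟩ : nonnegPart Γ)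
              (1 : AddMonoidAlgebra κ (pPowRat p))})
          (HahnSeries (nonnegPart Γ) (AddMonoidAlgebra κ (pPowRat p)))),
      (∀ l, (P l).IsPrime) ∧
      ∀ l m : Set.Ioo (0 : ℝ) 1, (l : ℝ) < (m : ℝ) → P l < P m := by
  have := HahnSeries.isAdicComplete_span_single_one (R := AddMonoidAlgebra κ (pPowRat p)) h1
  obtain ⟨P, hP, hmono⟩ :=
    exists_strictMono_isPrime_hahnSeries (κ := κ) (Γ := Γ) hp.one_lt h1
  let e := (AdicCompletion.ofAlgEquiv (Ideal.span
    {HahnSeries.single (⟨1, h1, zero_le_one⟩ : nonnegPart Γ)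
      (1 : AddMonoidAlgebra κ (pPowRat p))})).symm.toRingEquiv
  refine ⟨fun l => (P l).comap e, fun l => ?_, fun l m hlm => ?_⟩
  · have := hP l
    exact Ideal.comap_isPrime _ _
  · exact lt_of_le_of_ne (Ideal.comap_mono (hmono hlm).le) fun h =>
      (hmono hlm).ne (Ideal.comap_injective_of_surjective e e.surjective h)
end

section
/- Let p be a prime. Suppose that for every noetherian local domain (A, 𝔪) that is 𝔪-adically complete, of mixed characteristic (char A = 0, p ∈ 𝔪) and of Krull dimension exactly 2, the p-adic completion of A⁺ (the integral closure of A in an algebraic closure of its fraction field) admits a family of prime ideals indexed by the real interval (0,1) that is strictly increasing under inclusion. Then for every noetherian local domain (A, 𝔪) that is 𝔪-adically complete, of mixed characteristic and of Krull dimension at least 2, the p-adic completion of A⁺ admits such a family; in particular it has uncountable Krull dimension. -/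
set_option synthInstance.maxHeartbeats 1000000
set_option maxHeartbeats 1000000

theorem AdicCompletion.exists_surjective_ringHom {R S : Type*} [CommRing R] [CommRing S]
    (f : R →+* S) (hf : Function.Surjective f) (I : Ideal R) (J : Ideal S) (hIJ : I.map f = J) :
    ∃ g : AdicCompletion I R →+* AdicCompletion J S, Function.Surjective g := by
  have hpow (n : ℕ) : (I ^ n).map f = J ^ n := by rw [Ideal.map_pow, hIJ]
  have hle (n : ℕ) : I ^ n ≤ (J ^ n).comap f := by
    rw [← hpow]; exact Ideal.le_comap_map
  let F (n : ℕ) : AdicCompletion I R →+* S ⧸ J ^ n :=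
    (Ideal.quotientMap (J ^ n) f (hle n)).comp (AdicCompletion.evalₐ I n).toRingHom
  have hF {m n : ℕ} (hmn : m ≤ n) : (Ideal.Quotient.factorPow J hmn).comp (F n) = F m := by
    ext x
    obtain ⟨r, rfl⟩ := AdicCompletion.mk_surjective I R x
    simp only [F, RingHom.comp_apply, AlgHom.toRingHom_eq_coe, RingHom.coe_coe,
      AdicCompletion.evalₐ_mk, Ideal.quotientMap_mk]
    change Ideal.Quotient.mk (J ^ m) (f (r n)) = Ideal.Quotient.mk (J ^ m) (f (r m))
    rw [Ideal.Quotient.eq, ← map_sub]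
    refine hle m ?_
    have h : r m ≡ r n [SMOD (I ^ m • ⊤ : Submodule R R)] := r.2 hmn
    rwa [SModEq.comm, SModEq.sub_mem, smul_eq_mul, Ideal.mul_top] at h
  refine ⟨AdicCompletion.liftRingHom J F hF, fun y ↦ ?_⟩
  obtain ⟨s, rfl⟩ := AdicCompletion.mk_surjective J S y
  have hdiff (n : ℕ) : ∃ t ∈ I ^ n, f t = s (n + 1) - s n := by
    have h : s n ≡ s (n + 1) [SMOD (J ^ n • ⊤ : Submodule S S)] := s.2 n.le_succ
    rw [SModEq.comm, SModEq.sub_mem, smul_eq_mul, Ideal.mul_top, ← hpow] at h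
    exact (Ideal.mem_map_iff_of_surjective f hf).1 h
  choose t ht hft using hdiff
  obtain ⟨r₀, hr₀⟩ := hf (s 0)
  let r (n : ℕ) : R := r₀ + ∑ i ∈ Finset.range n, t i
  have hfr (n : ℕ) : f (r n) = s n := by
    simp only [r, map_add, map_sum, hft, hr₀, Finset.sum_range_sub (fun i ↦ s i)]
    abel
  refine ⟨AdicCompletion.mk I R (AdicCompletion.AdicCauchySequence.mk I R r fun n ↦ ?_), ?_⟩
  · rw [SModEq.comm, SModEq.sub_mem, smul_eq_mul, Ideal.mul_top]
    simpa [r, Finset.sum_range_succ] using ht n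
  · refine AdicCompletion.ext_evalₐ fun n ↦ ?_
    rw [AdicCompletion.evalₐ_liftRingHom, AdicCompletion.evalₐ_mk]
    simp only [F, RingHom.comp_apply, AlgHom.toRingHom_eq_coe, RingHom.coe_coe,
      AdicCompletion.evalₐ_mk, Ideal.quotientMap_mk]
    exact congrArg _ (hfr n)

theorem exists_prime_two_le_ringKrullDim_quotient {B : Type*} [CommRing B] [IsDomain B]
    [IsNoetherianRing B] {b : B} (hb : b ≠ 0) (h : 3 ≤ ringKrullDim B) :
    ∃ P : Ideal B, P.IsPrime ∧ P ≠ ⊥ ∧ b ∉ P ∧ 2 ≤ ringKrullDim (B ⧸ P) := by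
  obtain ⟨l, hl⟩ := (Order.le_krullDim_iff (n := 3)).1 h
  have hlt (i j : Fin (l.length + 1)) (hij : i < j) : (l i).asIdeal < (l j).asIdeal :=
    l.strictMono hij
  let P₁ := l ⟨1, by omega⟩
  let P₂ := l ⟨2, by omega⟩
  let P₃ := l ⟨3, by omega⟩
  have h01 : (l 0).asIdeal < P₁.asIdeal := hlt _ _ (by simp [Fin.lt_def])
  have h12 : P₁.asIdeal < P₂.asIdeal := hlt _ _ (by simp [Fin.lt_def])
  have h23 : P₂ < P₃ := l.strictMono (by simp [Fin.lt_def])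
  have hheight : 2 ≤ P₂.asIdeal.height := by
    have h1 := Ideal.height_add_one_le_of_lt_of_isPrime h01
    have h2 := Ideal.height_add_one_le_of_lt_of_isPrime h12
    calc (2 : ℕ∞) = 0 + 1 + 1 := by norm_num
      _ ≤ (l 0).asIdeal.height + 1 + 1 := by gcongr; exact zero_le
      _ ≤ P₁.asIdeal.height + 1 := by gcongr
      _ ≤ _ := h2
  have hnot : ¬ ((P₂.asIdeal : Set B) ⊆ 
      ⋃ Q ∈ insert ⊥ (Ideal.span {b}).minimalPrimes, (Q : Set B)) := by
    intro hsub
    obtain ⟨Q, rfl | hQ, hle⟩ := (Ideal.subset_union_prime_finite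
      ((Ideal.finite_minimalPrimes_of_isNoetherianRing B (Ideal.span {b})).insert ⊥) (f := id) ⊥ ⊥
      fun Q hQ h _ ↦ (hQ.resolve_left h).1.1).1 hsub
    · exact not_lt_bot (h12.trans_le hle)
    have := hQ.1.1
    have h1 := Ideal.height_le_one_of_isPrincipal_of_mem_minimalPrimes _ Q hQ
    have := (hheight.trans (Ideal.height_mono hle)).trans h1
    norm_num at this
  obtain ⟨x, hx, hxb⟩ := Set.not_subset.1 hnot
  simp only [Set.mem_iUnion, not_exists] at hxb
  have hx0 : x ≠ 0 := fun h ↦ hxb ⊥ (Set.mem_insert _ _) (by simpa using h)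
  obtain ⟨P, hP, hPle⟩ := Ideal.exists_minimalPrimes_le (I := Ideal.span {x}) (J := P₂.asIdeal)
    (by simpa [Ideal.span_le] using hx)
  have hPprime := hP.1.1
  have hxP : x ∈ P := hP.1.2 (Ideal.mem_span_singleton_self x)
  have hP1 := Ideal.height_le_one_of_isPrincipal_of_mem_minimalPrimes _ P hP
  have hPlt : P < P₂.asIdeal := lt_of_le_of_ne hPle fun h ↦ by
    rw [h] at hP1
    have := hheight.trans hP1
    norm_num at this
  refine ⟨P, hPprime, fun h ↦ hx0 (by simpa [h] using hxP), fun hbP ↦ ?_, ?_⟩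
  · obtain ⟨Q, hQ, hQP⟩ := Ideal.exists_minimalPrimes_le (I := Ideal.span {b}) (J := P)
      (by simpa [Ideal.span_le] using hbP)
    have hQprime := hQ.1.1
    obtain rfl | hlt := hQP.eq_or_lt
    · exact hxb Q (Set.mem_insert_of_mem _ hQ) hxP
    · have hQ0 : Q.height ≠ 0 := fun h ↦ by
        rw [Ideal.height_eq_zero_iff_eq_bot] at h
        exact hb (by simpa [h] using hQ.1.2 (Ideal.mem_span_singleton_self b))
      have h2 := (Ideal.height_add_one_le_of_lt_of_isPrime hlt).trans hP1
      have h3 : 1 + 1 ≤ Q.height + 1 := by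
        gcongr; exact Order.one_le_iff_pos.2 (pos_iff_ne_zero.2 hQ0)
      have := h3.trans h2
      norm_num at this
  · rw [ringKrullDim_quotient]
    refine (Order.le_krullDim_iff (n := 2)).2 ⟨⟨2, ![⟨⟨P, hPprime⟩, ?_⟩, ⟨P₂, ?_⟩, ⟨P₃, ?_⟩], ?_⟩, rfl⟩
    · exact le_refl P
    · exact hPle
    · exact hPle.trans h23.le
    · intro i
      fin_cases i
      · exact hPlt
      · exact h23

theorem exists_prime_ringKrullDim_quotient_eq_two {A : Type*} [CommRing A] [IsDomain A]
    [IsNoetherianRing A] {a : A} (ha : a ≠ 0) (h : 2 ≤ ringKrullDim A) :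
    ∃ q : Ideal A, q.IsPrime ∧ a ∉ q ∧ ringKrullDim (A ⧸ q) = 2 := by
  let s : Set (Ideal A) := {q | q.IsPrime ∧ a ∉ q ∧ 2 ≤ ringKrullDim (A ⧸ q)}
  have hs : s.Nonempty := ⟨⊥, Ideal.isPrime_bot, by simpa using ha, by
    rwa [ringKrullDim_eq_of_ringEquiv (RingEquiv.quotientBot A)]⟩
  obtain ⟨q, ⟨hq, haq, hdim⟩, hmax⟩ := set_has_maximal_iff_noetherian.2 ‹_› s hs
  refine ⟨q, hq, haq, le_antisymm ?_ hdim⟩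
  by_contra hlt
  have h3 : 3 ≤ ringKrullDim (A ⧸ q) := by
    rw [← two_add_one_eq_three]
    exact ENat.WithBot.add_one_le_iff.2 (not_le.1 hlt)
  obtain ⟨P, hP, hP0, haP, hPdim⟩ := exists_prime_two_le_ringKrullDim_quotient
    (b := Ideal.Quotient.mk q a) (by rwa [Ne, Ideal.Quotient.eq_zero_iff_mem]) h3
  have hsurj := Ideal.Quotient.mk_surjective (I := q)
  refine hmax (P.comap (Ideal.Quotient.mk q)) ⟨hP.comap _, haP, ?_⟩ (lt_of_le_of_ne ?_ ?_)
  · exact hPdim.trans (ringKrullDim_le_of_surjective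
      (Ideal.quotientMap _ (Ideal.Quotient.mk q) le_rfl) (Ideal.quotientMap_surjective hsurj))
  · intro x hx
    simp [Ideal.Quotient.eq_zero_iff_mem.2 hx]
  · intro h
    refine hP0 ?_
    rw [← Ideal.map_comap_of_surjective _ hsurj P, ← h, Ideal.map_quotient_self]

open Polynomial in
theorem Polynomial.Monic.splits_map_integralClosure {A K : Type*} [CommRing A] [Field K]
    [IsAlgClosed K] [Algebra A K] {f : A[X]} (hf : f.Monic) :
    (f.map (algebraMap A (integralClosure A K))).Splits := by
  refine Splits.of_splits_map_of_injective (i := algebraMap (integralClosure A K) K)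
    Subtype.val_injective (IsAlgClosed.splits _) fun a ha ↦ ⟨⟨a, f, hf, ?_⟩, rfl⟩
  have := (mem_roots'.1 ha).2
  rwa [map_map, ← IsScalarTower.algebraMap_eq, IsRoot, eval_map] at this

open Polynomial in
theorem exists_surjective_integralClosure_quotient {A K : Type*} [CommRing A]
    [Field K] [IsAlgClosed K] [Algebra A K] [FaithfulSMul A K] (q : Ideal A) [q.IsPrime]
    {L : Type*} [Field L] [IsAlgClosed L] [Algebra (A ⧸ q) L] [FaithfulSMul (A ⧸ q) L] :
    ∃ φ : integralClosure A K →+* integralClosure (A ⧸ q) L, Function.Surjective φ := by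
  have : FaithfulSMul A (integralClosure A K) :=
    (faithfulSMul_iff_algebraMap_injective _ _).2 fun a b h ↦
      FaithfulSMul.algebraMap_injective A K (congrArg Subtype.val h)
  obtain ⟨⟨Q, hQ, hQq⟩⟩ := Ideal.nonempty_primesOver (S := integralClosure A K) q
  let g : (integralClosure A K ⧸ Q) →ₐ[A ⧸ q] L := IsAlgClosed.lift
  let φ : integralClosure A K →+* integralClosure (A ⧸ q) L :=
    (g.codRestrict (integralClosure (A ⧸ q) L)
      fun x ↦ (Algebra.IsIntegral.isIntegral x).map g).toRingHom.comp (Ideal.Quotient.mk Q)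
  have hφ (a : A) : ((φ (algebraMap A _ a) : integralClosure (A ⧸ q) L) : L) =
      algebraMap (A ⧸ q) L (Ideal.Quotient.mk q a) := g.commutes (Ideal.Quotient.mk q a)
  refine ⟨φ, ?_⟩
  rintro ⟨y, f, hf, hfy⟩
  obtain ⟨F, hF, -, hFm⟩ := lifts_and_natDegree_eq_and_monic
    (f := Ideal.Quotient.mk q) (p := f) (by
      rw [lifts_iff_coeff_lifts]
      exact fun n ↦ Ideal.Quotient.mk_surjective _) hf
  obtain ⟨s, hs⟩ := splits_iff_exists_multiset.1 (hFm.splits_map_integralClosure (K := K))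
  rw [(hFm.map _).leadingCoeff, C_1, one_mul] at hs
  let ψ : integralClosure A K →+* L := (algebraMap (integralClosure (A ⧸ q) L) L).comp φ
  have hψ : ψ.comp (algebraMap A (integralClosure A K)) =
      (algebraMap (A ⧸ q) L).comp (Ideal.Quotient.mk q) := RingHom.ext hφ
  have hprod : ((s.map fun a ↦ y - ψ a).prod) = 0 := by
    rw [← hfy, ← hF, eval₂_map, ← hψ, ← eval₂_map, hs, eval₂_multiset_prod]
    simp
  obtain ⟨a, -, ha⟩ := Multiset.mem_map.1 (Multiset.prod_eq_zero_iff.1 hprod)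
  exact ⟨a, Subtype.ext (sub_eq_zero.1 ha).symm⟩

theorem isAdicComplete_maximalIdeal_quotient {A : Type*} [CommRing A] [IsNoetherianRing A]
    [IsLocalRing A] [IsAdicComplete (IsLocalRing.maximalIdeal A) A] (q : Ideal A)
    [IsLocalRing (A ⧸ q)] :
    IsAdicComplete (IsLocalRing.maximalIdeal (A ⧸ q)) (A ⧸ q) := by
  have hpre : IsPrecomplete (IsLocalRing.maximalIdeal A) (A ⧸ q) := by
    rw [← AdicCompletion.of_surjective_iff]
    intro y
    obtain ⟨x, rfl⟩ := AdicCompletion.map_surjective (IsLocalRing.maximalIdeal A)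
      (f := q.mkQ) q.mkQ_surjective y
    obtain ⟨a, rfl⟩ := AdicCompletion.of_surjective (IsLocalRing.maximalIdeal A) A x
    exact ⟨q.mkQ a, (AdicCompletion.map_of ..).symm⟩
  have hmap : (IsLocalRing.maximalIdeal A).map (algebraMap A (A ⧸ q)) =
      IsLocalRing.maximalIdeal (A ⧸ q) :=
    IsLocalRing.map_maximalIdeal_of_surjective _ Ideal.Quotient.mk_surjective
  rw [← IsPrecomplete.map_algebraMap_iff (S := A ⧸ q), hmap] at hpre
  exact { toIsHausdorff := inferInstance, toIsPrecomplete := hpre }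

theorem charZero_quotient {A : Type*} [CommRing A] [IsLocalRing A] {p : ℕ} (hp : p.Prime)
    (hpm : (p : A) ∈ IsLocalRing.maximalIdeal A) {q : Ideal A} [hq : q.IsPrime]
    (hpq : (p : A) ∉ q) :
    CharZero (A ⧸ q) := by
  refine charZero_of_inj_zero fun n hn ↦ by_contra fun hn0 ↦ ?_
  obtain ⟨k, m, hm, rfl⟩ := Nat.exists_eq_pow_mul_and_not_dvd hn0 p hp.ne_one
  have hmem : ((p ^ k * m : ℕ) : A) ∈ q := by
    rwa [← Ideal.Quotient.eq_zero_iff_mem, map_natCast]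
  push_cast at hmem
  obtain h | h := hq.mem_or_mem hmem
  · exact hpq (hq.mem_of_pow_mem _ h)
  · have hcop : IsCoprime (p : A) (m : A) :=
      Nat.Coprime.cast ((Nat.Prime.coprime_iff_not_dvd hp).2 hm)
    obtain ⟨u, v, huv⟩ := hcop
    refine (IsLocalRing.maximalIdeal.isMaximal A).ne_top ((Ideal.eq_top_iff_one _).2 ?_)
    rw [← huv]
    exact Ideal.add_mem _ (Ideal.mul_mem_left _ _ hpm)
      (Ideal.mul_mem_left _ _ (IsLocalRing.le_maximalIdeal hq.ne_top h))

/-- if for every complete noetherian local domain of mixed characteristic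
`(0, p)` and Krull dimension exactly `2` the `p`-adic completion of the absolute integral
closure `A⁺` has a strictly increasing chain of prime ideals indexed by `(0,1)`, then the
same holds for every complete noetherian local domain of mixed characteristic of Krull
dimension at least `2`; in particular the latter has uncountable Krull dimension. -/
theorem absoluteIntegralClosure_uncountable_chain_of_primes_of_dim_two_case
    (p : ℕ) (hp : p.Prime)
    (H : ∀ (A : Type) [CommRing A] [IsDomain A] [IsNoetherianRing A] [IsLocalRing A],
      IsAdicComplete (IsLocalRing.maximalIdeal A) A → CharZero A →
      (p : A) ∈ IsLocalRing.maximalIdeal A → ringKrullDim A = 2 →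
      ∃ P : Set.Ioo (0 : ℝ) 1 →
          Ideal (AdicCompletion
            (Ideal.span
              {(p : integralClosure A (AlgebraicClosure (FractionRing A)))})
            (integralClosure A (AlgebraicClosure (FractionRing A)))),
        (∀ l, (P l).IsPrime) ∧
        ∀ l m : Set.Ioo (0 : ℝ) 1, (l : ℝ) < (m : ℝ) → P l < P m) :
    ∀ (A : Type) [CommRing A] [IsDomain A] [IsNoetherianRing A] [IsLocalRing A],
      IsAdicComplete (IsLocalRing.maximalIdeal A) A → CharZero A →
      (p : A) ∈ IsLocalRing.maximalIdeal A → 2 ≤ ringKrullDim A →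
      ∃ P : Set.Ioo (0 : ℝ) 1 →
          Ideal (AdicCompletion
            (Ideal.span
              {(p : integralClosure A (AlgebraicClosure (FractionRing A)))})
            (integralClosure A (AlgebraicClosure (FractionRing A)))),
        (∀ l, (P l).IsPrime) ∧
        ∀ l m : Set.Ioo (0 : ℝ) 1, (l : ℝ) < (m : ℝ) → P l < P m := by
  intro A _ _ _ _ hc h0 hpm hdim
  have hp0 : (p : A) ≠ 0 := Nat.cast_ne_zero.2 hp.ne_zero
  obtain ⟨q, hq, hpq, hq2⟩ := exists_prime_ringKrullDim_quotient_eq_two hp0 hdim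
  have : IsLocalRing (A ⧸ q) :=
    .of_surjective' (Ideal.Quotient.mk q) Ideal.Quotient.mk_surjective
  have hpm' : ((p : ℕ) : A ⧸ q) ∈ IsLocalRing.maximalIdeal (A ⧸ q) := by
    rw [← IsLocalRing.map_maximalIdeal_of_surjective (Ideal.Quotient.mk q)
      Ideal.Quotient.mk_surjective, ← map_natCast (Ideal.Quotient.mk q)]
    exact Ideal.mem_map_of_mem _ hpm
  obtain ⟨P, hP, hlt⟩ := H (A ⧸ q) (isAdicComplete_maximalIdeal_quotient q)
    (charZero_quotient hp hpm hpq) hpm' hq2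
  have hfaithful (B : Type) [CommRing B] [IsDomain B] :
      FaithfulSMul B (AlgebraicClosure (FractionRing B)) := by
    rw [faithfulSMul_iff_algebraMap_injective,
      IsScalarTower.algebraMap_eq B (FractionRing B) (AlgebraicClosure (FractionRing B))]
    exact (algebraMap (FractionRing B) _).injective.comp (IsFractionRing.injective B _)
  have := hfaithful A
  have := hfaithful (A ⧸ q)
  obtain ⟨φ, hφ⟩ := exists_surjective_integralClosure_quotient
    (K := AlgebraicClosure (FractionRing A)) q (L := AlgebraicClosure (FractionRing (A ⧸ q)))
  obtain ⟨g, hg⟩ := AdicCompletion.exists_surjective_ringHom φ hφ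
    (Ideal.span {(p : integralClosure A (AlgebraicClosure (FractionRing A)))})
    (Ideal.span {(p : integralClosure (A ⧸ q) (AlgebraicClosure (FractionRing (A ⧸ q))))})
    (by rw [Ideal.map_span, Set.image_singleton, map_natCast])
  exact ⟨fun l ↦ (P l).comap g, fun l ↦ (hP l).comap g, fun l m hlm ↦
    (Ideal.orderEmbeddingOfSurjective g hg).strictMono (hlt l m hlm)⟩
end
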